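/- There exists a constant C > 0 such that for every T with 0 ≤ T ≤ 1 and every admissible source g on [0,T]×ℝ², the Duhamel term D(t) = ∫₀^t U(t−τ) g(τ) dτ satisfies (∫_ℝ (sup_{(x₂,t) ∈ ℝ×[0,T]} |D(t)(x₁,x₂)|)² dx₁)^{1/2} ≤ C ∫₀^T ‖g(τ)‖_{H^{7/9}(ℝ²)} dτ. -/

import Mathlib

/-!
The proof is a `TT*` argument combined with a dyadic decomposition of the frequencies.

*Symmetrisation.* With `ξ₁ = a + b`, `ξ₂ = √3 (a - b)` the phase `ξ₁(ξ₁² + ξ₂²)` becomes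
`4(a³ + b³)`, so for tensor-product amplitudes the space-time kernel of `U` factors into two
one-dimensional Airy-type kernels `kk`, with arguments `y₁`, `y₂` whose half sum is a multiple of
`x₁`. These are estimated by van der Corput's method (`vdc_core`, `kk_bounds`) and decay beyond the
scale `1/N + 3tN²` by integration by parts (`kk_decay_bounds`).

*Kernel bound.* At frequency `N` the product of the two kernels is dominated, uniformly in
`|s| ≤ 1` and in `x₂`, by a function of `x₁` alone of integral `O(N^{3/2})` (`kernel_bound`,
`lintegral_HH`). The weight `(1+|ξ|²)^{-7/9}` is, up to a constant, at most a sum of pieces `vv` of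
size `N^{-14/9}` at the dyadic scales `N` (`weight_lower`), and `14/9 > 3/2`, so the majorants can
be summed (`weight_facts`).

*Maximal estimate.* For measurable `X₂`, `S` the operator `φ ↦ (U(S(x₁))φ)(x₁, X₂(x₁))` has a
`TT*` whose kernel is dominated by a convolution kernel in `x₁`, and is therefore bounded from
`H^{7/9}` to `L²` uniformly in `X₂`, `S` (`tt_star`, `linearized_bound`). The supremum over a
dense sequence of points `(x₂, s)` is linearised by a measurable choice of the maximising index
(`lintegral_iSup_sq_le`), which gives `maximal_bound`: the maximal function of the free evolution
on `[0,1]` is bounded from `H^{7/9}` to `L²`.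

*Duhamel term.* Pointwise the maximal function of the Duhamel term is at most the integral in `τ`
of the maximal functions of `U(·)g(τ)`, and Minkowski's integral inequality concludes.
-/

open MeasureTheory
open scoped ENNReal NNReal

noncomputable section

/-- Fourier transform on ℝ² (realized as ℝ × ℝ). -/
def FT (f : ℝ × ℝ → ℂ) : ℝ × ℝ → ℂ := fun ξ =>
  ∫ x : ℝ × ℝ,
    Complex.exp (((-(2 * Real.pi * (x.1 * ξ.1 + x.2 * ξ.2)) : ℝ) : ℂ) * Complex.I) * f x

/-- Inverse Fourier transform on ℝ². -/
def FTinv (f : ℝ × ℝ → ℂ) : ℝ × ℝ → ℂ := fun x =>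
  ∫ ξ : ℝ × ℝ,
    Complex.exp ((((2 * Real.pi * (x.1 * ξ.1 + x.2 * ξ.2)) : ℝ) : ℂ) * Complex.I) * f ξ

/-- The linear Zakharov–Kuznetsov group `U(t)φ = F⁻¹(e^{i t ξ₁(ξ₁²+ξ₂²)} Fφ)`. -/
def U (t : ℝ) (φ : ℝ × ℝ → ℂ) : ℝ × ℝ → ℂ :=
  FTinv (fun ξ => Complex.exp (Complex.I * ((t * ξ.1 * (ξ.1 ^ 2 + ξ.2 ^ 2) : ℝ) : ℂ)) * FT φ ξ)

/-- Fractional derivative in the first variable: `D^r_{x₁} f = F⁻¹(|ξ₁|^r F f)`. -/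
def Dx1 (r : ℝ) (f : ℝ × ℝ → ℂ) : ℝ × ℝ → ℂ :=
  FTinv (fun ξ => ((|ξ.1| ^ r : ℝ) : ℂ) * FT f ξ)

/-- Fractional derivative in the second variable: `D^r_{x₂} f = F⁻¹(|ξ₂|^r F f)`. -/
def Dx2 (r : ℝ) (f : ℝ × ℝ → ℂ) : ℝ × ℝ → ℂ :=
  FTinv (fun ξ => ((|ξ.2| ^ r : ℝ) : ℂ) * FT f ξ)

/-- Partial derivative ∂_{x₁}. -/
def pd1 (f : ℝ × ℝ → ℂ) : ℝ × ℝ → ℂ := fun x => fderiv ℝ f x (1, 0)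

/-- Partial derivative ∂_{x₂}. -/
def pd2 (f : ℝ × ℝ → ℂ) : ℝ × ℝ → ℂ := fun x => fderiv ℝ f x (0, 1)

/-- Duhamel integral `∫₀^t U(t-τ) g(τ) dτ`. -/
def Duh (g : ℝ → ℝ × ℝ → ℂ) (t : ℝ) : ℝ × ℝ → ℂ := fun x =>
  ∫ τ in (0:ℝ)..t, U (t - τ) (g τ) x

/-- Sobolev norm `‖f‖_{H^s(ℝ²)}`. -/
def HsNorm (s : ℝ) (f : ℝ × ℝ → ℂ) : ℝ≥0∞ :=
  (∫⁻ ξ : ℝ × ℝ,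
      ENNReal.ofReal ((1 + ξ.1 ^ 2 + ξ.2 ^ 2) ^ s) * (‖FT f ξ‖₊ : ℝ≥0∞) ^ (2 : ℝ)) ^ ((1:ℝ)/2)

/-- The mixed norm `‖f‖_{L^{9/4}_T L^∞_x}`. -/
def L94LinfNorm (T : ℝ) (f : ℝ → ℝ × ℝ → ℂ) : ℝ≥0∞ :=
  (∫⁻ t in Set.Icc (0:ℝ) T, (eLpNorm (f t) ⊤ volume) ^ ((9:ℝ)/4)) ^ ((4:ℝ)/9)

/-- The mixed norm `‖f‖_{L²_{x₁} L^∞_{x₂ T}}` (with genuine suprema). -/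
def L2x1LinfNorm (T : ℝ) (f : ℝ → ℝ × ℝ → ℂ) : ℝ≥0∞ :=
  (∫⁻ x₁ : ℝ,
      (⨆ x₂ : ℝ, ⨆ t ∈ Set.Icc (0:ℝ) T, (‖f t (x₁, x₂)‖₊ : ℝ≥0∞)) ^ (2 : ℝ)) ^ ((1:ℝ)/2)

/-- The mixed norm `‖f‖_{L^∞_{x₁} L²_{x₂ T}}`. -/
def LinfX1L2Norm (T : ℝ) (f : ℝ → ℝ × ℝ → ℂ) : ℝ≥0∞ :=
  ⨆ x₁ : ℝ,
    (∫⁻ x₂ : ℝ, ∫⁻ t in Set.Icc (0:ℝ) T, (‖f t (x₁, x₂)‖₊ : ℝ≥0∞) ^ (2 : ℝ)) ^ ((1:ℝ)/2)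

/-- The mixed norm `‖g‖_{L¹_{x₁} L²_{x₂ T}}`. -/
def L1x1L2Norm (T : ℝ) (g : ℝ → ℝ × ℝ → ℂ) : ℝ≥0∞ :=
  ∫⁻ x₁ : ℝ,
    (∫⁻ x₂ : ℝ, ∫⁻ τ in Set.Icc (0:ℝ) T, (‖g τ (x₁, x₂)‖₊ : ℝ≥0∞) ^ (2 : ℝ)) ^ ((1:ℝ)/2)

/-! ### Van der Corput by a global integration by parts -/

namespace ZK
open Real Filter Topology

/-- The oscillating factor `e^{i(ta³+ya)}`. -/
def ph (t y a : ℝ) : ℂ := Complex.exp (((t * a ^ 3 + y * a : ℝ) : ℂ) * Complex.I)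

lemma norm_ph (t y a : ℝ) : ‖ph t y a‖ = 1 := Complex.norm_exp_ofReal_mul_I _

lemma continuous_ph (t y : ℝ) : Continuous (ph t y) := by
  unfold ph; fun_prop

lemma hasDerivAt_ph (t y a : ℝ) :
    HasDerivAt (ph t y) (ph t y a * (((3 * t * a ^ 2 + y : ℝ) : ℂ) * Complex.I)) a := by
  unfold ph
  have h : HasDerivAt (fun a : ℝ => t * a ^ 3 + y * a) (3 * t * a ^ 2 + y) a := by
    have := ((hasDerivAt_pow 3 a).const_mul t).add ((hasDerivAt_id a).const_mul y)
    refine HasDerivAt.congr_deriv this ?_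
    push_cast; ring
  exact ((h.ofReal_comp).mul_const Complex.I).cexp

lemma integrable_comp_abs_of {g : ℝ → ℝ} (hg : IntegrableOn g (Set.Ioi 0)) :
    Integrable (fun a => g |a|) := by
  have h1 : IntegrableOn (fun a => g |a|) (Set.Ioi 0) :=
    hg.congr_fun (fun a ha => by simp [abs_of_pos (Set.mem_Ioi.1 ha)]) measurableSet_Ioi
  have h2 : IntegrableOn (fun a => g |a|) (Set.Iic 0) := by
    rw [integrableOn_Iic_iff_integrableOn_Iio]
    have h := IntegrableOn.comp_neg_Iio (c := (0 : ℝ)) (f := fun a => g |a|) (by simpa using h1)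
    simpa using h
  have := h2.union h1
  rwa [Set.Iic_union_Ioi, integrableOn_univ] at this

/-- The total variation of `arctan (m φ')` for `φ' = 3ta² + y`. -/
lemma variation_bound {t m : ℝ} (ht : 0 < t) (hm : 0 < m) (y : ℝ) :
    Integrable (fun a : ℝ => 6 * t * m * |a| / (1 + (m * (3 * t * a ^ 2 + y)) ^ 2)) ∧
    ∫ a : ℝ, 6 * t * m * |a| / (1 + (m * (3 * t * a ^ 2 + y)) ^ 2) ≤ 2 * π := by
  set g : ℝ → ℝ := fun a => 6 * t * m * a / (1 + (m * (3 * t * a ^ 2 + y)) ^ 2) with hg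
  have hd : ∀ a ∈ Set.Ici (0:ℝ),
      HasDerivAt (fun a => arctan (m * (3 * t * a ^ 2 + y))) (g a) a := by
    intro a _
    have h : HasDerivAt (fun a : ℝ => m * (3 * t * a ^ 2 + y)) (6 * t * m * a) a := by
      have := ((((hasDerivAt_pow 2 a).const_mul (3 * t)).add_const y).const_mul m)
      refine HasDerivAt.congr_deriv this ?_
      push_cast; ring
    convert h.arctan using 1
    simp only [hg]; ring
  have hp : ∀ a ∈ Set.Ioi (0:ℝ), 0 ≤ g a := by
    intro a ha
    have : 0 < a := ha
    simp only [hg]; positivity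
  have hl : Tendsto (fun a => arctan (m * (3 * t * a ^ 2 + y))) atTop (𝓝 (π / 2)) := by
    refine (tendsto_arctan_atTop.mono_right nhdsWithin_le_nhds).comp ?_
    refine Tendsto.const_mul_atTop hm (tendsto_atTop_add_const_right _ _ ?_)
    exact (tendsto_pow_atTop two_ne_zero).const_mul_atTop (by positivity)
  have hi := integrableOn_Ioi_deriv_of_nonneg' hd hp hl
  have hv := integral_Ioi_of_hasDerivAt_of_nonneg' hd hp hl
  have e : (fun a : ℝ => 6 * t * m * |a| / (1 + (m * (3 * t * a ^ 2 + y)) ^ 2))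
      = fun a => g |a| := by
    funext a; simp only [hg, sq_abs]
  rw [e]
  refine ⟨integrable_comp_abs_of hi, ?_⟩
  rw [integral_comp_abs, hv]
  have := neg_pi_div_two_lt_arctan (m * (3 * t * 0 ^ 2 + y))
  linarith

/-- Integration by parts for `∫ e^{iφ}ψ` against the vector field `(1 - i m² φ' ∂)/(1 + m² φ'²)`,
which fixes `e^{iφ}`: no boundary terms and no splitting of the line at the critical points. -/
lemma vdc_core {t m : ℝ} (ht : 0 < t) (hm : 0 < m) (y : ℝ) {ψ ψ' : ℝ → ℝ}
    (hd : ∀ a, HasDerivAt ψ (ψ' a) a) (hψ : Integrable ψ) (hψ' : Integrable ψ')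
    {P : ℝ} (hP : ∀ a, |ψ a| ≤ P)
    (hJ : Integrable (fun a : ℝ => (1 + (m * (3 * t * a ^ 2 + y)) ^ 2)⁻¹)) :
    ‖∫ a, ph t y a * (ψ a : ℂ)‖ ≤
      P * (∫ a : ℝ, (1 + (m * (3 * t * a ^ 2 + y)) ^ 2)⁻¹) + m * (∫ a, |ψ' a|) + 2 * π * m * P := by
  obtain ⟨hV, hVb⟩ := variation_bound ht hm y
  set f : ℝ → ℝ := fun a => m * (3 * t * a ^ 2 + y) with hf
  have hfc : Continuous f := by fun_prop
  have hψc : Continuous ψ := continuous_iff_continuousAt.2 fun a => (hd a).continuousAt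
  have hP0 : 0 ≤ P := (abs_nonneg _).trans (hP 0)
  have hpos : ∀ a, 0 < 1 + f a ^ 2 := fun a => by positivity
  have hfd : ∀ a, HasDerivAt f (6 * t * m * a) a := by
    intro a
    have := ((((hasDerivAt_pow 2 a).const_mul (3 * t)).add_const y).const_mul m)
    refine HasDerivAt.congr_deriv this ?_
    push_cast; ring
  -- `q = m² φ' ψ / (1 + m² φ'²)` and its derivative
  set q : ℝ → ℝ := fun a => m * (f a * (1 + f a ^ 2)⁻¹) * ψ a with hq
  set q' : ℝ → ℝ := fun a =>
    m * (6 * t * m * a * ((1 - f a ^ 2) / (1 + f a ^ 2) ^ 2)) * ψ a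
      + m * (f a * (1 + f a ^ 2)⁻¹) * ψ' a with hq'
  have hqd : ∀ a, HasDerivAt q (q' a) a := by
    intro a
    have h1 : HasDerivAt (fun a => f a * (1 + f a ^ 2)⁻¹)
        (6 * t * m * a * ((1 - f a ^ 2) / (1 + f a ^ 2) ^ 2)) a := by
      have := (hfd a).mul ((((hfd a).pow 2).const_add 1).inv (hpos a).ne')
      refine HasDerivAt.congr_deriv this ?_
      have := (hpos a).ne'
      simp only [Pi.pow_apply, Pi.inv_apply]
      field_simp
      ring
    exact (h1.const_mul m).mul (hd a)
  have hk : ∀ a, |f a * (1 + f a ^ 2)⁻¹| ≤ 1 := by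
    intro a
    rw [abs_mul, abs_of_pos (inv_pos.2 (hpos a)), ← div_eq_mul_inv, div_le_one (hpos a)]
    nlinarith [sq_abs (f a), sq_nonneg (|f a| - 1)]
  have hk2 : ∀ a, |(1 - f a ^ 2) / (1 + f a ^ 2) ^ 2| ≤ (1 + f a ^ 2)⁻¹ := by
    intro a
    rw [abs_div, abs_of_pos (pow_pos (hpos a) 2), div_le_iff₀ (pow_pos (hpos a) 2)]
    have : (1 + f a ^ 2)⁻¹ * (1 + f a ^ 2) ^ 2 = 1 + f a ^ 2 := by
      field_simp
    rw [this, abs_le]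
    constructor <;> nlinarith [sq_nonneg (f a)]
  have hcinv : Continuous fun a => (1 + f a ^ 2)⁻¹ :=
    Continuous.inv₀ (by fun_prop) fun a => (hpos a).ne'
  have hqi : Integrable q := by
    refine hψ.bdd_mul (c := m) ?_ ?_
    · exact (continuous_const.mul (hfc.mul hcinv)).aestronglyMeasurable
    · refine ae_of_all _ fun a => ?_
      rw [norm_mul, Real.norm_eq_abs, Real.norm_eq_abs, abs_of_pos hm]
      nlinarith [hk a]
  have hq'b : ∀ a, |q' a| ≤ P * m * (6 * t * m * |a| / (1 + f a ^ 2)) + m * |ψ' a| := by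
    intro a
    refine (abs_add_le _ _).trans (add_le_add ?_ ?_)
    · rw [abs_mul, abs_mul, abs_mul, abs_of_pos hm, abs_mul, abs_of_pos (by positivity : 0 < 6 * t * m)]
      calc m * (6 * t * m * |a| * |(1 - f a ^ 2) / (1 + f a ^ 2) ^ 2|) * |ψ a|
          ≤ m * (6 * t * m * |a| * (1 + f a ^ 2)⁻¹) * P := by
            gcongr
            · exact hk2 a
            · exact hP a
        _ = _ := by rw [div_eq_mul_inv]; ring
    · rw [abs_mul, abs_mul, abs_of_pos hm]
      have := hk a
      calc m * |f a * (1 + f a ^ 2)⁻¹| * |ψ' a| ≤ m * 1 * |ψ' a| := by gcongr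
        _ = _ := by ring
  have hq'i0 : Integrable (fun a => P * m * (6 * t * m * |a| / (1 + f a ^ 2)) + m * |ψ' a|) :=
    (hV.const_mul (P * m)).add (hψ'.abs.const_mul m)
  have hq'i : Integrable q' := by
    refine hq'i0.mono' ?_ (ae_of_all _ hq'b)
    refine AEStronglyMeasurable.add ?_ ?_
    · refine Continuous.aestronglyMeasurable ?_
      refine (continuous_const.mul (Continuous.mul (by fun_prop) ?_)).mul hψc
      exact Continuous.div (by fun_prop) (by fun_prop) fun a => (pow_pos (hpos a) 2).ne'
    · exact ((continuous_const.mul (hfc.mul hcinv)).aestronglyMeasurable).mul hψ'.1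
  have hphm : AEStronglyMeasurable (ph t y) volume := (continuous_ph t y).aestronglyMeasurable
  have hphb : ∀ᵐ a, ‖ph t y a‖ ≤ 1 := ae_of_all _ fun a => (norm_ph t y a).le
  have iA : Integrable fun a => ph t y a * (ψ a : ℂ) := hψ.ofReal.bdd_mul hphm hphb
  have iB : Integrable fun a => ph t y a * (((1 + f a ^ 2)⁻¹ * ψ a : ℝ) : ℂ) := by
    refine Integrable.bdd_mul (Integrable.ofReal ?_) hphm hphb
    refine hψ.bdd_mul (c := 1) hcinv.aestronglyMeasurable (ae_of_all _ fun a => ?_)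
    rw [Real.norm_eq_abs, abs_of_pos (inv_pos.2 (hpos a))]
    exact inv_le_one_of_one_le₀ (by nlinarith [sq_nonneg (f a)])
  have iC : Integrable fun a => ph t y a * (q' a : ℂ) := hq'i.ofReal.bdd_mul hphm hphb
  have hF : ∀ a, HasDerivAt (fun a => ph t y a * (q a : ℂ))
      (Complex.I * (ph t y a * (ψ a : ℂ) - ph t y a * (((1 + f a ^ 2)⁻¹ * ψ a : ℝ) : ℂ))
        + ph t y a * (q' a : ℂ)) a := by
    intro a
    have := (hasDerivAt_ph t y a).mul (hqd a).ofReal_comp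
    refine HasDerivAt.congr_deriv this ?_
    have e : ((ψ a - (1 + f a ^ 2)⁻¹ * ψ a : ℝ) : ℂ) = (((3 * t * a ^ 2 + y) * q a : ℝ) : ℂ) := by
      congr 1
      have := (hpos a).ne'
      simp only [hq]
      have e2 : m * (f a * (1 + f a ^ 2)⁻¹) * ψ a * (3 * t * a ^ 2 + y)
        = f a * (f a * (1 + f a ^ 2)⁻¹) * ψ a := by simp only [hf]; ring
      rw [mul_comm (3 * t * a ^ 2 + y), e2]
      field_simp
      ring
    push_cast at e ⊢
    linear_combination -Complex.I * ph t y a * e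
  have iD : Integrable fun a => Complex.I *
      (ph t y a * (ψ a : ℂ) - ph t y a * (((1 + f a ^ 2)⁻¹ * ψ a : ℝ) : ℂ)) :=
    (iA.sub iB).const_mul _
  have h0 := integral_eq_zero_of_hasDerivAt_of_integrable hF
    (iD.add iC) (hqi.ofReal.bdd_mul hphm hphb)
  rw [integral_add iD iC, integral_const_mul, integral_sub iA iB] at h0
  have h1 : ∫ a, ph t y a * (ψ a : ℂ) = (∫ a, ph t y a * (((1 + f a ^ 2)⁻¹ * ψ a : ℝ) : ℂ))
      + Complex.I * ∫ a, ph t y a * (q' a : ℂ) := by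
    linear_combination (-Complex.I) * h0
      + ((∫ a, ph t y a * (ψ a : ℂ)) - ∫ a, ph t y a * (((1 + f a ^ 2)⁻¹ * ψ a : ℝ) : ℂ))
        * Complex.I_sq
  rw [h1]
  have b1 : ‖∫ a, ph t y a * (((1 + f a ^ 2)⁻¹ * ψ a : ℝ) : ℂ)‖ ≤ P * ∫ a, (1 + f a ^ 2)⁻¹ := by
    rw [← integral_const_mul]
    refine norm_integral_le_of_norm_le (hJ.const_mul P) (ae_of_all _ fun a => ?_)
    rw [norm_mul, norm_ph, one_mul, Complex.norm_real, Real.norm_eq_abs, abs_mul,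
      abs_of_pos (inv_pos.2 (hpos a)), mul_comm]
    have := (inv_pos.2 (hpos a)).le
    gcongr
    exact hP a
  have b2 : ‖Complex.I * ∫ a, ph t y a * (q' a : ℂ)‖ ≤ P * m * (2 * π) + m * ∫ a, |ψ' a| := by
    rw [norm_mul, Complex.norm_I, one_mul]
    have : ‖∫ a, ph t y a * (q' a : ℂ)‖
        ≤ ∫ a, (P * m * (6 * t * m * |a| / (1 + f a ^ 2)) + m * |ψ' a|) := by
      refine norm_integral_le_of_norm_le hq'i0 (ae_of_all _ fun a => ?_)
      rw [norm_mul, norm_ph, one_mul, Complex.norm_real]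
      exact hq'b a
    refine this.trans ?_
    rw [integral_add (hV.const_mul (P * m)) (hψ'.abs.const_mul m), integral_const_mul,
      integral_const_mul]
    gcongr
  refine (norm_add_le _ _).trans ?_
  linarith

end ZK

/-! ### One-dimensional Airy-type kernels -/

namespace ZK
open Real Filter Topology

lemma J_bound {f : ℝ → ℝ} (hf : Continuous f) {r c K : ℝ} (hr : 0 < r) (hK : 0 ≤ K)
    (h : ∀ a, (1 + f a ^ 2)⁻¹ ≤ K * (1 + (r * (|a| - c)) ^ 2)⁻¹) :
    Integrable (fun a => (1 + f a ^ 2)⁻¹) ∧ ∫ a, (1 + f a ^ 2)⁻¹ ≤ K * (2 * π / r) := by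
  set g : ℝ → ℝ := fun a => (1 + (r * (a - c)) ^ 2)⁻¹ with hg
  have hgi : Integrable g :=
    ((integrable_inv_one_add_sq).comp_mul_left' hr.ne').comp_sub_right c
  have hgv : ∫ a, g a = π / r := by
    rw [integral_sub_right_eq_self (fun a => (1 + (r * a) ^ 2)⁻¹) c,
      Measure.integral_comp_mul_left (fun a : ℝ => (1 + a ^ 2)⁻¹) r, integral_univ_inv_one_add_sq,
      abs_of_pos (inv_pos.2 hr), smul_eq_mul]
    ring
  have hg0 : ∀ a, 0 ≤ g a := fun a => by simp only [hg]; positivity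
  have hgabs : Integrable fun a => g |a| := integrable_comp_abs_of hgi.integrableOn
  have hgabsv : ∫ a, g |a| ≤ 2 * π / r := by
    rw [integral_comp_abs]
    have : ∫ a in Set.Ioi (0:ℝ), g a ≤ ∫ a, g a :=
      setIntegral_le_integral hgi (ae_of_all _ hg0)
    rw [hgv] at this
    linarith [mul_div_assoc 2 π r]
  have hi : Integrable (fun a => (1 + f a ^ 2)⁻¹) := by
    refine (hgabs.const_mul K).mono' ?_ (ae_of_all _ fun a => ?_)
    · exact (Continuous.inv₀ (by fun_prop) fun a => by positivity).aestronglyMeasurable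
    · rw [Real.norm_eq_abs, abs_of_nonneg (by positivity)]
      exact h a
  refine ⟨hi, ?_⟩
  calc ∫ a, (1 + f a ^ 2)⁻¹ ≤ ∫ a, K * g |a| := integral_mono hi (hgabs.const_mul K) h
    _ = K * ∫ a, g |a| := integral_const_mul _ _
    _ ≤ _ := by gcongr

/-- `φ' = 3ta² + y` is at least as large as for the worst sign of `y`, where it vanishes at `±c`. -/
lemma phase_lower {t c y : ℝ} (ht : 0 < t) (hy : |y| = 3 * t * c ^ 2) (a : ℝ) :
    (3 * t * ((|a| - c) * (|a| + c))) ^ 2 ≤ (3 * t * a ^ 2 + y) ^ 2 := by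
  rw [← sq_abs a]
  have ha := abs_nonneg a
  rcases abs_cases y with ⟨h, h'⟩ | ⟨h, h'⟩
  · have e : y = 3 * t * c ^ 2 := by linarith
    rw [e]
    have : 0 ≤ t ^ 2 * (|a| ^ 2 * c ^ 2) := by positivity
    nlinarith
  · have e : y = -(3 * t * c ^ 2) := by linarith
    rw [e]
    apply le_of_eq; ring

/-- Second-derivative bound: `φ'' = 6ta` has size `tc` at the critical points `±c`. -/
lemma vdc2 {t c y s : ℝ} (ht : 0 < t) (hc : 0 < c) (hy : |y| = 3 * t * c ^ 2) (hs : 0 < s)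
    (hst : s ^ 2 = t * c) {ψ ψ' : ℝ → ℝ}
    (hd : ∀ a, HasDerivAt ψ (ψ' a) a) (hψ : Integrable ψ) (hψ' : Integrable ψ')
    {P : ℝ} (hP : ∀ a, |ψ a| ≤ P) :
    ‖∫ a, ph t y a * (ψ a : ℂ)‖ * s ≤ 4 * π * (P + ∫ a, |ψ' a|) := by
  have hP0 : 0 ≤ P := (abs_nonneg _).trans (hP 0)
  have hQ0 : 0 ≤ ∫ a, |ψ' a| := integral_nonneg fun a => abs_nonneg _
  have hJ := J_bound (f := fun a => s⁻¹ * (3 * t * a ^ 2 + y)) (by fun_prop) hs zero_le_one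
    (c := c) (by
      intro a
      rw [one_mul]
      refine inv_anti₀ (by positivity) ?_
      have h1 := phase_lower ht hy a
      have h2 : (s * (|a| - c)) ^ 2 = (s⁻¹) ^ 2 * (t * c * (|a| - c)) ^ 2 := by
        rw [← hst]; field_simp
      have h3 : (t * c * (|a| - c)) ^ 2 ≤ (3 * t * ((|a| - c) * (|a| + c))) ^ 2 := by
        have e1 : (t * c * (|a| - c)) ^ 2 = (t * (|a| - c)) ^ 2 * c ^ 2 := by ring
        have e2 : (3 * t * ((|a| - c) * (|a| + c))) ^ 2
          = (t * (|a| - c)) ^ 2 * (9 * (|a| + c) ^ 2) := by ring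
        rw [e1, e2]
        have := abs_nonneg a
        gcongr
        nlinarith [mul_nonneg this hc.le]
      have h4 : (s⁻¹ * (3 * t * a ^ 2 + y)) ^ 2 = (s⁻¹) ^ 2 * (3 * t * a ^ 2 + y) ^ 2 := by ring
      rw [h2, h4]
      have := h3.trans h1
      gcongr)
  have h := vdc_core ht (inv_pos.2 hs) y hd hψ hψ' hP hJ.1
  have h5 : ‖∫ a, ph t y a * (ψ a : ℂ)‖
      ≤ P * (1 * (2 * π / s)) + s⁻¹ * (∫ a, |ψ' a|) + 2 * π * s⁻¹ * P := by
    refine h.trans ?_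
    gcongr
    exact hJ.2
  have h6 : (P * (1 * (2 * π / s)) + s⁻¹ * (∫ a, |ψ' a|) + 2 * π * s⁻¹ * P) * s
      = 4 * π * P + ∫ a, |ψ' a| := by
    field_simp; ring
  calc _ ≤ (P * (1 * (2 * π / s)) + s⁻¹ * (∫ a, |ψ' a|) + 2 * π * s⁻¹ * P) * s := by gcongr
    _ = _ := h6
    _ ≤ _ := by nlinarith [pi_gt_three]

/-- Third-derivative bound: `φ''' = 6t` everywhere. -/
lemma vdc3 {t τ : ℝ} (y : ℝ) (hτ : 0 < τ) (ht : τ ^ 3 = t) {ψ ψ' : ℝ → ℝ}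
    (hd : ∀ a, HasDerivAt ψ (ψ' a) a) (hψ : Integrable ψ) (hψ' : Integrable ψ')
    {P : ℝ} (hP : ∀ a, |ψ a| ≤ P) :
    ‖∫ a, ph t y a * (ψ a : ℂ)‖ * τ ≤ 6 * π * (P + ∫ a, |ψ' a|) := by
  have hP0 : 0 ≤ P := (abs_nonneg _).trans (hP 0)
  have hQ0 : 0 ≤ ∫ a, |ψ' a| := integral_nonneg fun a => abs_nonneg _
  have ht0 : 0 < t := by rw [← ht]; positivity
  obtain ⟨c, hc, hy⟩ : ∃ c : ℝ, 0 ≤ c ∧ |y| = 3 * t * c ^ 2 := by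
    refine ⟨√(|y| / (3 * t)), sqrt_nonneg _, ?_⟩
    rw [sq_sqrt (by positivity)]
    field_simp
  have hJ := J_bound (f := fun a => τ⁻¹ * (3 * t * a ^ 2 + y)) (by fun_prop) hτ zero_le_two
    (c := c) (by
      intro a
      have h1 := phase_lower ht0 hy a
      have ha := abs_nonneg a
      set u := |a| - c with hu
      have h3 : (3 * t * u ^ 2) ^ 2 ≤ (3 * t * a ^ 2 + y) ^ 2 := by
        refine le_trans ?_ h1
        have e1 : (3 * t * u ^ 2) ^ 2 = (3 * t * u) ^ 2 * u ^ 2 := by ring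
        have e2 : (3 * t * (u * (|a| + c))) ^ 2 = (3 * t * u) ^ 2 * (|a| + c) ^ 2 := by ring
        rw [e1, e2]
        refine mul_le_mul_of_nonneg_left ?_ (sq_nonneg _)
        simp only [hu]
        nlinarith [mul_nonneg ha hc]
      have h4 : (τ⁻¹ * (3 * t * a ^ 2 + y)) ^ 2 = (τ⁻¹) ^ 2 * (3 * t * a ^ 2 + y) ^ 2 := by ring
      have h5 : (3 * (τ * u) ^ 2) ^ 2 ≤ (τ⁻¹ * (3 * t * a ^ 2 + y)) ^ 2 := by
        have e : (3 * (τ * u) ^ 2) ^ 2 = (τ⁻¹) ^ 2 * (3 * t * u ^ 2) ^ 2 := by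
          rw [← ht]; field_simp
        rw [e, h4]
        gcongr
      rw [← div_eq_mul_inv, inv_le_comm₀ (by positivity) (by positivity), inv_div,
        div_le_iff₀ two_pos]
      nlinarith [sq_nonneg (3 * (τ * u) ^ 2 - 1), sq_nonneg (τ * u)])
  have h := vdc_core ht0 (inv_pos.2 hτ) y hd hψ hψ' hP hJ.1
  have h5 : ‖∫ a, ph t y a * (ψ a : ℂ)‖
      ≤ P * (2 * (2 * π / τ)) + τ⁻¹ * (∫ a, |ψ' a|) + 2 * π * τ⁻¹ * P := by
    refine h.trans ?_
    gcongr
    exact hJ.2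
  have h6 : (P * (2 * (2 * π / τ)) + τ⁻¹ * (∫ a, |ψ' a|) + 2 * π * τ⁻¹ * P) * τ
      = 6 * π * P + ∫ a, |ψ' a| := by
    field_simp; ring
  calc _ ≤ (P * (2 * (2 * π / τ)) + τ⁻¹ * (∫ a, |ψ' a|) + 2 * π * τ⁻¹ * P) * τ := by gcongr
    _ = _ := h6
    _ ≤ _ := by nlinarith [pi_gt_three]

/-- The amplitudes `x^j e^{-x²}`. -/
def psi (j : ℕ) (x : ℝ) : ℝ := x ^ j * exp (-x ^ 2)

/-- The derivative of `psi j`; at `j = 0` the truncated index `j - 1` has coefficient `0`. -/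
def psi' (j : ℕ) (x : ℝ) : ℝ := j * psi (j - 1) x - 2 * psi (j + 1) x

lemma continuous_psi (j : ℕ) : Continuous (psi j) := by unfold psi; fun_prop

lemma hasDerivAt_psi (j : ℕ) (x : ℝ) : HasDerivAt (psi j) (psi' j x) x := by
  have h1 : HasDerivAt (fun x : ℝ => exp (-x ^ 2)) (exp (-x ^ 2) * (-(2 * x))) x := by
    have := ((hasDerivAt_pow 2 x).neg).exp
    refine HasDerivAt.congr_deriv this ?_
    simp
  refine HasDerivAt.congr_deriv ((hasDerivAt_pow j x).mul h1) ?_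
  simp only [psi', psi]
  ring

lemma integrable_psi (j : ℕ) : Integrable (psi j) := by
  have := integrable_rpow_mul_exp_neg_mul_sq one_pos (s := (j : ℝ))
    (by have : (0:ℝ) ≤ j := Nat.cast_nonneg j; linarith)
  refine this.congr (ae_of_all _ fun x => ?_)
  simp [psi]

lemma integrable_psi' (j : ℕ) : Integrable (psi' j) :=
  ((integrable_psi _).const_mul _).sub ((integrable_psi _).const_mul _)

lemma psi_bdd (j : ℕ) : ∃ P, ∀ x, |psi j x| ≤ P := by
  refine ⟨j.factorial * exp 1, fun x => ?_⟩
  have h := pow_div_factorial_le_exp |x| (abs_nonneg x) j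
  rw [div_le_iff₀ (by positivity)] at h
  rw [psi, abs_mul, abs_pow, abs_of_pos (exp_pos _)]
  calc |x| ^ j * exp (-x ^ 2) ≤ exp |x| * j.factorial * exp (-x ^ 2) := by gcongr
    _ = j.factorial * exp (|x| - x ^ 2) := by rw [sub_eq_add_neg, exp_add]; ring
    _ ≤ _ := by
      gcongr
      nlinarith [sq_abs x, sq_nonneg (|x| - 1)]

/-- The one-dimensional Airy-type kernels `∫ e^{i(ta³+ya)} (a/N)^j e^{-(a/N)²} da`. -/
def kk (j : ℕ) (N t y : ℝ) : ℂ := ∫ a, ph t y a * (psi j (a / N) : ℂ)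

lemma hasDerivAt_psi_div (j : ℕ) {N : ℝ} (a : ℝ) :
    HasDerivAt (fun a => psi j (a / N)) (psi' j (a / N) / N) a := by
  have := (hasDerivAt_psi j (a / N)).comp a ((hasDerivAt_id a).div_const N)
  refine HasDerivAt.congr_deriv this ?_
  ring

/-- The three size bounds for the kernels: trivial, third-derivative and second-derivative. -/
lemma kk_bounds (j : ℕ) : ∃ M : ℝ, 0 ≤ M ∧
    (∀ N t y : ℝ, 0 < N → ‖kk j N t y‖ ≤ M * N) ∧
    (∀ N t y τ : ℝ, 0 < N → 0 < τ → τ ^ 3 = t → ‖kk j N t y‖ * τ ≤ M) ∧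
    (∀ N t y c s : ℝ, 0 < N → 0 < t → 0 < c → |y| = 3 * t * c ^ 2 → 0 < s → s ^ 2 = t * c →
      ‖kk j N t y‖ * s ≤ M) := by
  obtain ⟨P, hP⟩ := psi_bdd j
  have hP0 : 0 ≤ P := (abs_nonneg _).trans (hP 0)
  have hQ0 : 0 ≤ ∫ a, |psi' j a| := integral_nonneg fun a => abs_nonneg _
  have hA0 : 0 ≤ ∫ a, |psi j a| := integral_nonneg fun a => abs_nonneg _
  have hQ : ∀ N : ℝ, 0 < N → ∫ a, |psi' j (a / N) / N| = ∫ a, |psi' j a| := by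
    intro N hN
    have e : (fun a => |psi' j (a / N) / N|) = fun a => N⁻¹ * |psi' j (a / N)| := by
      funext a; rw [abs_div, abs_of_pos hN]; ring
    rw [e, integral_const_mul, Measure.integral_comp_div (fun a => |psi' j a|) N, abs_of_pos hN,
      smul_eq_mul]
    field_simp
  have hi : ∀ N : ℝ, 0 < N → Integrable fun a => psi j (a / N) :=
    fun N hN => (integrable_psi j).comp_div hN.ne'
  have hi' : ∀ N : ℝ, 0 < N → Integrable fun a => psi' j (a / N) / N :=
    fun N hN => ((integrable_psi' j).comp_div hN.ne').div_const N
  have hpi := pi_pos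
  refine ⟨6 * π * (P + ∫ a, |psi' j a|) + ∫ a, |psi j a|, by positivity, ?_, ?_, ?_⟩
  · intro N t y hN
    have h1 : ‖kk j N t y‖ ≤ ∫ a, |psi j (a / N)| := by
      refine norm_integral_le_of_norm_le (hi N hN).abs (ae_of_all _ fun a => ?_)
      rw [norm_mul, norm_ph, one_mul, Complex.norm_real, Real.norm_eq_abs]
    rw [Measure.integral_comp_div (fun a => |psi j a|) N, abs_of_pos hN, smul_eq_mul] at h1
    refine h1.trans ?_
    rw [mul_comm N]
    gcongr
    have : 0 ≤ 6 * π * (P + ∫ a, |psi' j a|) := by positivity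
    linarith
  · intro N t y τ hN hτ ht
    have := vdc3 y hτ ht (fun a => hasDerivAt_psi_div j (N := N) a) (hi N hN) (hi' N hN)
      (fun a => hP _)
    rw [hQ N hN] at this
    exact this.trans (by linarith)
  · intro N t y c s hN ht hc hy hs hst
    have := vdc2 ht hc hy hs hst (fun a => hasDerivAt_psi_div j (N := N) a) (hi N hN) (hi' N hN)
      (fun a => hP _)
    rw [hQ N hN] at this
    refine this.trans ?_
    have : 0 ≤ 2 * π * (P + ∫ a, |psi' j a|) := by positivity
    linarith

/-- Integration by parts: `∫ (e^{iφ} ψ)' = 0`. -/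
lemma kk_identity (j : ℕ) {N : ℝ} (hN : 0 < N) (t y : ℝ) :
    (y : ℂ) * kk j N t y = -(3 * t * N ^ 2 : ℝ) * kk (j + 2) N t y
      + Complex.I * (N⁻¹ : ℝ) * (j * kk (j - 1) N t y - 2 * kk (j + 1) N t y) := by
  have hi : ∀ i, Integrable fun a => ph t y a * (psi i (a / N) : ℂ) := fun i =>
    (((integrable_psi i).comp_div hN.ne').ofReal).bdd_mul (c := 1)
      (continuous_ph t y).aestronglyMeasurable (ae_of_all _ fun a => (norm_ph t y a).le)
  have hd : ∀ a, HasDerivAt (fun a => ph t y a * (psi j (a / N) : ℂ))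
      (Complex.I * (3 * t * N ^ 2 : ℝ) * (ph t y a * (psi (j + 2) (a / N) : ℂ))
        + Complex.I * y * (ph t y a * (psi j (a / N) : ℂ))
        + (N⁻¹ * j : ℝ) * (ph t y a * (psi (j - 1) (a / N) : ℂ))
        + (-2 * N⁻¹ : ℝ) * (ph t y a * (psi (j + 1) (a / N) : ℂ))) a := by
    intro a
    refine HasDerivAt.congr_deriv
      ((hasDerivAt_ph t y a).mul (hasDerivAt_psi_div j (N := N) a).ofReal_comp) ?_
    have e : ((a ^ 2 * psi j (a / N) : ℝ) : ℂ) = ((N ^ 2 * psi (j + 2) (a / N) : ℝ) : ℂ) := by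
      congr 1
      simp only [psi, pow_add]
      field_simp
    simp only [psi']
    push_cast at e ⊢
    linear_combination 3 * Complex.I * t * ph t y a * e
  have hc : ∀ (i : ℕ) (c : ℂ), Integrable fun a => c * (ph t y a * (psi i (a / N) : ℂ)) :=
    fun i c => (hi i).const_mul c
  have hAB : Integrable fun a =>
      Complex.I * (3 * t * N ^ 2 : ℝ) * (ph t y a * (psi (j + 2) (a / N) : ℂ))
        + Complex.I * y * (ph t y a * (psi j (a / N) : ℂ)) := (hc _ _).add (hc _ _)
  have hABC : Integrable fun a =>
      Complex.I * (3 * t * N ^ 2 : ℝ) * (ph t y a * (psi (j + 2) (a / N) : ℂ))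
        + Complex.I * y * (ph t y a * (psi j (a / N) : ℂ))
        + (N⁻¹ * j : ℝ) * (ph t y a * (psi (j - 1) (a / N) : ℂ)) := hAB.add (hc _ _)
  have h0 := integral_eq_zero_of_hasDerivAt_of_integrable hd
    (hABC.add (hc (j + 1) (-2 * N⁻¹ : ℝ))) (hi j)
  rw [integral_add hABC (hc _ _), integral_add hAB (hc _ _), integral_add (hc _ _) (hc _ _),
    integral_const_mul, integral_const_mul, integral_const_mul, integral_const_mul] at h0
  simp only [kk]
  push_cast at h0 ⊢
  linear_combination -Complex.I * h0 + (3 * t * N ^ 2 * (∫ a, ph t y a * (psi (j + 2) (a / N) : ℂ))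
    + y * (∫ a, ph t y a * (psi j (a / N) : ℂ))) * Complex.I_sq

end ZK

/-! ### Decay of the kernels and the product bound -/

namespace ZK
open Real Filter Topology

/-- Effect of one integration by parts on a family of constants. -/
def opM (M : ℕ → ℝ) (j : ℕ) : ℝ := M (j + 2) + j * M (j - 1) + 2 * M (j + 1)

lemma opM_nonneg {M : ℕ → ℝ} (hM : ∀ j, 0 ≤ M j) (j : ℕ) : 0 ≤ opM M j := by
  have := hM (j + 2); have := hM (j - 1); have := hM (j + 1)
  unfold opM; positivity

lemma kk_step {N t R : ℝ} (hN : 0 < N) (ht : 0 ≤ t) (hR : R = N⁻¹ + 3 * t * N ^ 2) (y : ℝ)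
    (j : ℕ) : |y| * ‖kk j N t y‖ ≤ R * opM (fun i => ‖kk i N t y‖) j := by
  have h := congrArg norm (kk_identity j hN t y)
  rw [norm_mul, Complex.norm_real, norm_eq_abs] at h
  rw [h]
  refine (norm_add_le _ _).trans ?_
  have hi : 0 < N⁻¹ := inv_pos.2 hN
  have e1 : ‖-(3 * t * N ^ 2 : ℝ) * kk (j + 2) N t y‖ = 3 * t * N ^ 2 * ‖kk (j + 2) N t y‖ := by
    rw [norm_mul, norm_neg, Complex.norm_real, norm_eq_abs, abs_of_nonneg (by positivity)]
  have e2 : ‖Complex.I * (N⁻¹ : ℝ) * (j * kk (j - 1) N t y - 2 * kk (j + 1) N t y)‖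
      ≤ N⁻¹ * (j * ‖kk (j - 1) N t y‖ + 2 * ‖kk (j + 1) N t y‖) := by
    rw [norm_mul, norm_mul, Complex.norm_I, one_mul, Complex.norm_real, norm_eq_abs, abs_of_pos hi]
    gcongr
    refine (norm_sub_le _ _).trans ?_
    simp
  rw [e1]
  refine (add_le_add_right e2 _).trans ?_
  have h3 : 3 * t * N ^ 2 ≤ R := by rw [hR]; linarith
  have h4 : N⁻¹ ≤ R := by rw [hR]; have : 0 ≤ 3 * t * N ^ 2 := by positivity
                          linarith
  have h5 : opM (fun i => ‖kk i N t y‖) j = ‖kk (j + 2) N t y‖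
      + (j * ‖kk (j - 1) N t y‖ + 2 * ‖kk (j + 1) N t y‖) := by simp only [opM]; ring
  rw [h5, mul_add R]
  exact add_le_add (mul_le_mul_of_nonneg_right h3 (norm_nonneg _))
    (mul_le_mul_of_nonneg_right h4 (by positivity))

/-- Two integrations by parts upgrade uniform bounds to quadratic decay beyond the scale
`R = 1/N + 3tN²`. -/
lemma kk_decay {N t R β : ℝ} (hN : 0 < N) (ht : 0 ≤ t) (hR : R = N⁻¹ + 3 * t * N ^ 2) {y : ℝ}
    (hβ : 0 ≤ β) {M : ℕ → ℝ} (h : ∀ j, ‖kk j N t y‖ * β ≤ M j) (j : ℕ) :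
    ‖kk j N t y‖ * β * (R ^ 2 + y ^ 2) ≤ (M j + opM (opM M) j) * R ^ 2 := by
  have hR0 : 0 ≤ R := by rw [hR]; positivity
  have hstep : ∀ i, |y| * (‖kk i N t y‖ * β) ≤ R * opM M i := by
    intro i
    have h1 := mul_le_mul_of_nonneg_right (kk_step hN ht hR y i) hβ
    calc |y| * (‖kk i N t y‖ * β) = |y| * ‖kk i N t y‖ * β := by ring
      _ ≤ R * opM (fun i => ‖kk i N t y‖) i * β := h1
      _ = R * (‖kk (i + 2) N t y‖ * β + i * (‖kk (i - 1) N t y‖ * β)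
          + 2 * (‖kk (i + 1) N t y‖ * β)) := by simp only [opM]; ring
      _ ≤ R * (M (i + 2) + i * M (i - 1) + 2 * M (i + 1)) := by
        gcongr <;> apply h
  have h2 : y ^ 2 * (‖kk j N t y‖ * β) ≤ R ^ 2 * opM (opM M) j := by
    have h1 := mul_le_mul_of_nonneg_right (kk_step hN ht hR y j) hβ
    calc y ^ 2 * (‖kk j N t y‖ * β) = |y| * (|y| * ‖kk j N t y‖ * β) := by
          rw [← sq_abs]; ring
      _ ≤ |y| * (R * opM (fun i => ‖kk i N t y‖) j * β) := by gcongr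
      _ = R * (|y| * (‖kk (j + 2) N t y‖ * β) + j * (|y| * (‖kk (j - 1) N t y‖ * β))
          + 2 * (|y| * (‖kk (j + 1) N t y‖ * β))) := by simp only [opM]; ring
      _ ≤ R * (R * opM M (j + 2) + j * (R * opM M (j - 1)) + 2 * (R * opM M (j + 1))) := by
        exact mul_le_mul_of_nonneg_left (add_le_add (add_le_add (hstep _)
          (mul_le_mul_of_nonneg_left (hstep _) (Nat.cast_nonneg j)))
          (mul_le_mul_of_nonneg_left (hstep _) zero_le_two)) hR0
      _ = _ := by rw [opM.eq_1 (opM M)]; ring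
  nlinarith [h j, sq_nonneg R]

/-- Decay of the kernels: in general, and (for frequencies with `tN³ ≥ 1`, `t = u⁶`, `N = n²`)
with the gain from stationary phase. The gain for `k₂` is better than for `k₀`, since its
amplitude vanishes at the degenerate point `a = 0`. -/
lemma kk_decay_bounds : ∃ D : ℝ, 0 ≤ D ∧
    (∀ N t R y : ℝ, ∀ j : ℕ, j = 0 ∨ j = 2 → 0 < N → 0 ≤ t → R = N⁻¹ + 3 * t * N ^ 2 →
      ‖kk j N t y‖ * N⁻¹ * (R ^ 2 + y ^ 2) ≤ D * R ^ 2) ∧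
    (∀ n u R y : ℝ, 0 < n → 0 < u → R = (n ^ 2)⁻¹ + 3 * u ^ 6 * (n ^ 2) ^ 2 →
      ‖kk 0 (n ^ 2) (u ^ 6) y‖ * u ^ 2 * (R ^ 2 + y ^ 2) ≤ D * R ^ 2) ∧
    (∀ n u R y : ℝ, 0 < n → 0 < u → 1 ≤ u * n → R = (n ^ 2)⁻¹ + 3 * u ^ 6 * (n ^ 2) ^ 2 →
      ‖kk 2 (n ^ 2) (u ^ 6) y‖ * (u ^ 3 * n) * (R ^ 2 + y ^ 2) ≤ D * R ^ 2) := by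
  choose M hM0 hM1 hM3 hM2 using kk_bounds
  set D0 : ℕ → ℝ := fun j => M j + opM (opM M) j with hD0
  have hD0n : ∀ j, 0 ≤ D0 j := fun j => add_nonneg (hM0 j) (opM_nonneg (opM_nonneg hM0) j)
  have hop : ∀ j, opM (opM fun i => 2 * M i) j = 2 * opM (opM M) j := by
    intro j; simp only [opM]; ring
  refine ⟨D0 0 + 2 * D0 2 + 6 * M 0 + 4 * M 1, by
    have := hD0n 0; have := hD0n 2; have := hM0 0; have := hM0 1; positivity, ?_, ?_, ?_⟩
  · intro N t R y j hj hN ht hR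
    have h := kk_decay hN ht hR (y := y) (inv_pos.2 hN).le (M := M) (fun j => by
      rw [← div_eq_mul_inv, div_le_iff₀ hN]; exact hM1 j N t y hN) j
    refine h.trans (mul_le_mul_of_nonneg_right ?_ (sq_nonneg R))
    have := hD0n 0; have := hD0n 2; have := hM0 0; have := hM0 1
    change D0 j ≤ _
    rcases hj with rfl | rfl <;> linarith
  · intro n u R y hn hu hR
    have h := kk_decay (N := n ^ 2) (t := u ^ 6) (by positivity) (by positivity) hR (y := y)
      (β := u ^ 2) (by positivity) (M := M)
      (fun j => hM3 j _ _ y _ (by positivity) (by positivity) (by ring)) 0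
    refine h.trans (mul_le_mul_of_nonneg_right ?_ (sq_nonneg R))
    have := hD0n 0; have := hD0n 2; have := hM0 0; have := hM0 1
    change D0 0 ≤ _
    linarith
  · intro n u R y hn hu hun hR
    have hd0 := hD0n 0; have hd2 := hD0n 2; have hm0 := hM0 0; have hm1 := hM0 1
    have hr : 3 * u ^ 6 * n ^ 4 ≤ R := by
      rw [hR]; have : 0 < (n ^ 2)⁻¹ := by positivity
      nlinarith
    set c : ℝ := √(|y| / (3 * u ^ 6)) with hc
    have hc2 : |y| = 3 * u ^ 6 * c ^ 2 := by
      rw [hc, sq_sqrt (by positivity)]; field_simp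
    have hc0 : 0 ≤ c := sqrt_nonneg _
    rcases le_total |y| (u ^ 6 * n ^ 4) with hy | hy
    · -- near the degenerate point the identity expresses `k₂` through `y k₀` and `k₁`
      have hy0 : |y| * ‖kk 0 (n ^ 2) (u ^ 6) y‖ ≤ 3 * M 0 * (u ^ 3 * n ^ 3) := by
        rcases hc0.eq_or_lt with h0 | h0
        · rw [hc2, ← h0]; simp; positivity
        · have hcn : c ≤ n ^ 2 := by
            have : u ^ 6 * (3 * c ^ 2) ≤ u ^ 6 * n ^ 4 := by linarith
            have := le_of_mul_le_mul_left this (by positivity)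
            nlinarith
          have hs : √(u ^ 6 * c) ^ 2 = u ^ 6 * c := sq_sqrt (by positivity)
          have hs0 : 0 < √(u ^ 6 * c) := sqrt_pos.2 (by positivity)
          have h := hM2 0 (n ^ 2) (u ^ 6) y c _ (by positivity) (by positivity) h0 hc2 hs0 hs
          have hs1 : √(u ^ 6 * c) ≤ u ^ 3 * n := by
            refine sqrt_le_iff.2 ⟨by positivity, ?_⟩
            calc u ^ 6 * c ≤ u ^ 6 * n ^ 2 := by gcongr
              _ = _ := by ring
          set s := √(u ^ 6 * c)
          calc |y| * ‖kk 0 (n ^ 2) (u ^ 6) y‖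
              = 3 * c * s * (‖kk 0 (n ^ 2) (u ^ 6) y‖ * s) := by
                rw [hc2]; linear_combination -3 * c * ‖kk 0 (n ^ 2) (u ^ 6) y‖ * hs
            _ ≤ 3 * n ^ 2 * (u ^ 3 * n) * M 0 := by gcongr
            _ = _ := by ring
      have h1 : (n ^ 2)⁻¹ * ‖kk 1 (n ^ 2) (u ^ 6) y‖ ≤ M 1 := by
        rw [inv_mul_le_iff₀ (by positivity), mul_comm]
        exact hM1 1 _ _ _ (by positivity)
      have hid := kk_identity 0 (N := n ^ 2) (by positivity) (u ^ 6) y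
      have hid2 : ((3 * u ^ 6 * n ^ 4 : ℝ) : ℂ) * kk 2 (n ^ 2) (u ^ 6) y
          = -(y * kk 0 (n ^ 2) (u ^ 6) y)
            - 2 * Complex.I * (((n ^ 2)⁻¹ : ℝ) * kk 1 (n ^ 2) (u ^ 6) y) := by
        push_cast at hid ⊢
        simp only [zero_mul, zero_sub] at hid
        linear_combination hid
      have h2 : 3 * u ^ 6 * n ^ 4 * ‖kk 2 (n ^ 2) (u ^ 6) y‖
          ≤ 3 * M 0 * (u ^ 3 * n ^ 3) + 2 * M 1 := by
        have := congrArg norm hid2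
        rw [norm_mul, Complex.norm_real, norm_eq_abs, abs_of_pos (by positivity)] at this
        rw [this]
        refine (norm_sub_le _ _).trans ?_
        rw [norm_neg, norm_mul, norm_mul, norm_mul, norm_mul, Complex.norm_real, Complex.norm_real,
          norm_eq_abs, norm_eq_abs, abs_of_pos (a := (n ^ 2)⁻¹) (by positivity), Complex.norm_I]
        simp only [Complex.norm_ofNat, mul_one]
        linarith
      have hun3 : 1 ≤ u ^ 3 * n ^ 3 := by rw [← mul_pow]; exact one_le_pow₀ hun
      have h3 : ‖kk 2 (n ^ 2) (u ^ 6) y‖ * (u ^ 3 * n) ≤ 3 * M 0 + 2 * M 1 := by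
        have : (u ^ 3 * n ^ 3) * (‖kk 2 (n ^ 2) (u ^ 6) y‖ * (u ^ 3 * n))
            ≤ (u ^ 3 * n ^ 3) * (3 * M 0 + 2 * M 1) := by
          have h4 : (u ^ 3 * n ^ 3) * (‖kk 2 (n ^ 2) (u ^ 6) y‖ * (u ^ 3 * n))
            = u ^ 6 * n ^ 4 * ‖kk 2 (n ^ 2) (u ^ 6) y‖ := by ring
          have h5 : 0 ≤ u ^ 6 * n ^ 4 * ‖kk 2 (n ^ 2) (u ^ 6) y‖ := by positivity
          rw [h4]
          nlinarith
        exact le_of_mul_le_mul_left this (by positivity)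
      have h6 : R ^ 2 + y ^ 2 ≤ 2 * R ^ 2 := by
        have : |y| ≤ R := by
          have : 0 ≤ u ^ 6 * n ^ 4 := by positivity
          linarith
        rw [← sq_abs y]
        nlinarith [abs_nonneg y]
      calc _ ≤ (3 * M 0 + 2 * M 1) * (2 * R ^ 2) := by gcongr
        _ = (6 * M 0 + 4 * M 1) * R ^ 2 := by ring
        _ ≤ _ := by gcongr; linarith
    · -- away from it the second-derivative bound is already good enough for every `j`
      have hcn : n ^ 2 / 2 ≤ c := by
        have : u ^ 6 * n ^ 4 ≤ u ^ 6 * (3 * c ^ 2) := by linarith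
        have := le_of_mul_le_mul_left this (by positivity)
        have hn2 : 0 < n ^ 2 := by positivity
        refine abs_le_of_sq_le_sq' ?_ hc0 |>.2
        nlinarith
      have h0 : 0 < c := lt_of_lt_of_le (by positivity) hcn
      have hs : √(u ^ 6 * c) ^ 2 = u ^ 6 * c := sq_sqrt (by positivity)
      have hs0 : 0 < √(u ^ 6 * c) := sqrt_pos.2 (by positivity)
      have hs1 : u ^ 3 * n ≤ 2 * √(u ^ 6 * c) := by
        have : u ^ 3 * n / 2 ≤ √(u ^ 6 * c) := by
          apply le_sqrt_of_sq_le
          calc (u ^ 3 * n / 2) ^ 2 ≤ u ^ 6 * (n ^ 2 / 2) := by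
                have : 0 ≤ u ^ 6 * n ^ 2 := by positivity
                nlinarith
            _ ≤ _ := by gcongr
        linarith
      have h := kk_decay (N := n ^ 2) (t := u ^ 6) (by positivity) (by positivity) hR (y := y)
        (β := u ^ 3 * n) (by positivity) (M := fun j => 2 * M j) (fun j => by
          have h := hM2 j (n ^ 2) (u ^ 6) y c _ (by positivity) (by positivity) h0 hc2 hs0 hs
          calc ‖kk j (n ^ 2) (u ^ 6) y‖ * (u ^ 3 * n)
              ≤ ‖kk j (n ^ 2) (u ^ 6) y‖ * (2 * √(u ^ 6 * c)) := by gcongr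
            _ ≤ _ := by linarith) 2
      refine h.trans (mul_le_mul_of_nonneg_right ?_ (sq_nonneg R))
      rw [hop]
      have : 2 * M 2 + 2 * opM (opM M) 2 = 2 * D0 2 := by rw [hD0]; ring
      linarith

lemma prod_decay {p q D β₁ β₂ R R' y₁ y₂ : ℝ} (hp : 0 ≤ p) (hq : 0 ≤ q) (hβ₁ : 0 ≤ β₁)
    (hβ₂ : 0 ≤ β₂) (hD : 0 ≤ D) (hR : 0 < R) (hR' : R ≤ R')
    (h₁ : p * β₁ * (R ^ 2 + y₁ ^ 2) ≤ D * R ^ 2) (h₂ : q * β₂ * (R ^ 2 + y₂ ^ 2) ≤ D * R ^ 2) :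
    p * q * (β₁ * β₂) * (R' ^ 2 + ((y₁ + y₂) / 2) ^ 2) ≤ D ^ 2 * R' ^ 2 := by
  set X := (y₁ + y₂) / 2 with hX
  have h3 : (p * β₁ * (R ^ 2 + y₁ ^ 2)) * (q * β₂ * (R ^ 2 + y₂ ^ 2))
      ≤ (D * R ^ 2) * (D * R ^ 2) := by gcongr
  have h4 : R ^ 2 * (R ^ 2 + X ^ 2) ≤ (R ^ 2 + y₁ ^ 2) * (R ^ 2 + y₂ ^ 2) := by
    have : X ^ 2 ≤ y₁ ^ 2 + y₂ ^ 2 := by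
      rw [hX]; nlinarith [sq_nonneg (y₁ - y₂), sq_nonneg y₁, sq_nonneg y₂]
    nlinarith [mul_le_mul_of_nonneg_left this (sq_nonneg R), mul_nonneg (sq_nonneg y₁) (sq_nonneg y₂)]
  set P := p * q * (β₁ * β₂) with hP
  have hP0 : 0 ≤ P := by positivity
  have h5 : R ^ 2 * (P * (R ^ 2 + X ^ 2)) ≤ R ^ 2 * (D ^ 2 * R ^ 2) := by
    calc _ = P * (R ^ 2 * (R ^ 2 + X ^ 2)) := by ring
      _ ≤ P * ((R ^ 2 + y₁ ^ 2) * (R ^ 2 + y₂ ^ 2)) := by gcongr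
      _ = (p * β₁ * (R ^ 2 + y₁ ^ 2)) * (q * β₂ * (R ^ 2 + y₂ ^ 2)) := by rw [hP]; ring
      _ ≤ _ := h3
      _ = _ := by ring
  have h6 := le_of_mul_le_mul_left h5 (by positivity)
  have h7 : P ≤ D ^ 2 := by
    have : P * R ^ 2 ≤ D ^ 2 * R ^ 2 := by nlinarith [sq_nonneg X]
    exact le_of_mul_le_mul_right this (by positivity)
  have h8 : R ^ 2 ≤ R' ^ 2 := by gcongr
  nlinarith [mul_nonneg (sub_nonneg.2 h7) (sub_nonneg.2 h8)]

/-- The profile dominating the kernels in the dispersive regime. -/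
def hh (z : ℝ) : ℝ := (if |z| ≤ 1 then |z| ^ (-(5 / 6) : ℝ) else 0) + (1 + z ^ 2)⁻¹

lemma hh_nonneg (z : ℝ) : 0 ≤ hh z := by
  unfold hh; split_ifs <;> positivity

lemma integrable_hh : Integrable hh := by
  refine Integrable.add ?_ integrable_inv_one_add_sq
  have h := integrable_comp_abs_of (g := fun z : ℝ => if z ≤ 1 then z ^ (-(5 / 6) : ℝ) else 0) (by
    have : IntegrableOn (fun z : ℝ => z ^ (-(5 / 6) : ℝ)) (Set.Ioc 0 1) := by
      rw [← intervalIntegrable_iff_integrableOn_Ioc_of_le zero_le_one]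
      exact intervalIntegral.intervalIntegrable_rpow' (by norm_num)
    have h2 : IntegrableOn ((Set.Iic (1:ℝ)).indicator fun z : ℝ => z ^ (-(5 / 6) : ℝ))
        (Set.Ioi 0) := by
      rw [IntegrableOn, integrable_indicator_iff measurableSet_Iic, IntegrableOn,
        Measure.restrict_restrict measurableSet_Iic, Set.inter_comm, Set.Ioi_inter_Iic]
      exact this
    refine h2.congr_fun (fun z _ => ?_) measurableSet_Ioi
    simp [Set.indicator_apply])
  exact h

set_option maxHeartbeats 800000 in
/-- Bound for the product of the two one-dimensional kernels, uniform in `0 ≤ t ≤ 4`, by a function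
of `X = (y₁ + y₂)/2` whose integral is `O(n³) = O(N^{3/2})`. -/
lemma kernel_bound : ∃ C : ℝ, 0 ≤ C ∧ ∀ n t y₁ y₂ : ℝ, 1 ≤ n → 0 ≤ t → t ≤ 4 →
    ‖kk 2 (n ^ 2) t y₁‖ * ‖kk 0 (n ^ 2) t y₂‖ ≤
      C * (n ^ 4 * (1 + ((y₁ + y₂) / 2 * n ^ 2) ^ 2)⁻¹ + n⁻¹ * hh ((y₁ + y₂) / 2 / n ^ 4)) := by
  obtain ⟨D, hD, ha, hb, hc⟩ := kk_decay_bounds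
  refine ⟨D ^ 2 * 16 * 64, by positivity, ?_⟩
  intro n t y₁ y₂ hn ht ht4
  have hn0 : 0 < n := by linarith
  set X := (y₁ + y₂) / 2 with hX
  set R := (n ^ 2)⁻¹ + 3 * t * (n ^ 2) ^ 2 with hR
  have hR0 : 0 < R := by positivity
  have hhX := hh_nonneg (X / n ^ 4)
  set P := ‖kk 2 (n ^ 2) t y₁‖ * ‖kk 0 (n ^ 2) t y₂‖ with hP
  have hP0 : 0 ≤ P := by positivity
  -- If `tN³ ≤ 1` there is no dispersion and the trivial bound at scale `1/N` suffices.
  rcases le_total (t * n ^ 6) 1 with h1 | h1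
  · have hR' : R ≤ 4 * (n ^ 2)⁻¹ := by
      have : t * (n ^ 2) ^ 2 ≤ (n ^ 2)⁻¹ := by
        rw [← one_div, le_div_iff₀ (by positivity)]
        linarith
      rw [hR]; linarith
    have h := prod_decay (norm_nonneg _) (norm_nonneg _) (by positivity) (by positivity) hD hR0 hR'
      (ha (n ^ 2) t R y₁ 2 (Or.inr rfl) (by positivity) ht hR)
      (ha (n ^ 2) t R y₂ 0 (Or.inl rfl) (by positivity) ht hR)
    rw [← hX, ← hP] at h
    have h2 : P * (16 + (X * n ^ 2) ^ 2) ≤ D ^ 2 * 16 * n ^ 4 := by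
      have e1 : P * ((n ^ 2)⁻¹ * (n ^ 2)⁻¹) * ((4 * (n ^ 2)⁻¹) ^ 2 + X ^ 2) * n ^ 8
        = P * (16 + (X * n ^ 2) ^ 2) := by field_simp; ring
      have e2 : D ^ 2 * (4 * (n ^ 2)⁻¹) ^ 2 * n ^ 8 = D ^ 2 * 16 * n ^ 4 := by field_simp; ring
      rw [← e1, ← e2]
      gcongr
    have h3 : P ≤ D ^ 2 * 16 * (n ^ 4 * (1 + (X * n ^ 2) ^ 2)⁻¹) := by
      rw [← mul_assoc, ← div_eq_mul_inv, le_div_iff₀ (by positivity)]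
      nlinarith
    have h4 : 0 ≤ n⁻¹ * hh (X / n ^ 4) := by positivity
    have h5 : 0 ≤ n ^ 4 * (1 + (X * n ^ 2) ^ 2)⁻¹ := by positivity
    have h6 : 0 ≤ D ^ 2 * 16 * (n ^ 4 * (1 + (X * n ^ 2) ^ 2)⁻¹) := by positivity
    have h7 : 0 ≤ D ^ 2 * 16 * (n⁻¹ * hh (X / n ^ 4)) := by positivity
    nlinarith
  · have htpos : 0 < t := by
      rcases ht.eq_or_lt with h | h
      · rw [← h] at h1; norm_num at h1
      · exact h
    -- Writing `t = u ^ 6` turns the fractional powers of `t` into monomials.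
    obtain ⟨u, hu0, hu⟩ : ∃ u : ℝ, 0 < u ∧ u ^ 6 = t :=
      ⟨t ^ ((6 : ℕ) : ℝ)⁻¹, by positivity, rpow_inv_natCast_pow ht (by norm_num)⟩
    subst hu
    have hun : 1 ≤ u * n := by
      by_contra hlt
      push Not at hlt
      have : (u * n) ^ 6 < 1 := pow_lt_one₀ (by positivity) hlt (by norm_num)
      rw [mul_pow] at this; linarith
    have hu2 : u ≤ 2 := by
      by_contra hlt
      push Not at hlt
      have : (2:ℝ) ^ 6 < u ^ 6 := by gcongr
      linarith
    have hR' : R ≤ 4 * (u ^ 6 * n ^ 4) := by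
      have : (n ^ 2)⁻¹ ≤ u ^ 6 * n ^ 4 := by
        rw [inv_le_iff_one_le_mul₀ (by positivity)]; linarith
      rw [hR]; linarith
    have h := prod_decay (norm_nonneg _) (norm_nonneg _) (by positivity) (by positivity) hD hR0 hR'
      (hc n u R y₁ hn0 hu0 hun hR) (hb n u R y₂ hn0 hu0 hR)
    rw [← hX, ← hP] at h
    set z := X / n ^ 4 with hz
    have hXz : X = z * n ^ 4 := by rw [hz]; field_simp
    have h2 : P * (u ^ 5 * n) * (u ^ 12 + z ^ 2) ≤ D ^ 2 * 16 * u ^ 12 := by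
      have h3 : n ^ 8 * (P * (u ^ 5 * n) * (u ^ 12 + z ^ 2)) ≤ n ^ 8 * (D ^ 2 * 16 * u ^ 12) := by
        calc _ ≤ P * (u ^ 3 * n * u ^ 2) * ((4 * (u ^ 6 * n ^ 4)) ^ 2 + X ^ 2) := by
              rw [hXz]
              have : 0 ≤ P * (u ^ 5 * n) * (15 * (u ^ 6 * n ^ 4) ^ 2) := by positivity
              linarith
          _ ≤ _ := h
          _ = _ := by ring
      exact le_of_mul_le_mul_left h3 (by positivity)
    have h5 : 0 ≤ n ^ 4 * (1 + (X * n ^ 2) ^ 2)⁻¹ := by positivity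
    rcases eq_or_ne z 0 with h0 | h0
    · -- `hh 0` is not large; here `tN³ ≥ 1` bounds the kernel by the first term
      have hX0 : X = 0 := by rw [hXz, h0]; ring
      have h3 : P * (u ^ 5 * n) ≤ D ^ 2 * 16 := by
        rw [h0] at h2
        have : u ^ 12 * (P * (u ^ 5 * n)) ≤ u ^ 12 * (D ^ 2 * 16) := by linarith
        exact le_of_mul_le_mul_left this (by positivity)
      have h4 : P ≤ D ^ 2 * 16 * n ^ 4 := by
        have h6 : 1 ≤ (u * n) ^ 5 := one_le_pow₀ hun
        calc P ≤ P * (u * n) ^ 5 := by nlinarith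
          _ = P * (u ^ 5 * n) * n ^ 4 := by ring
          _ ≤ _ := by gcongr
      rw [hX0]
      have h6 : 0 ≤ D ^ 2 * 16 * (n⁻¹ * hh z) := by positivity
      have h7 : 0 ≤ D ^ 2 * 16 * n ^ 4 := by positivity
      simp only [zero_mul, ne_eq, OfNat.ofNat_ne_zero, not_false_eq_true, zero_pow, add_zero,
        inv_one, mul_one]
      nlinarith
    suffices h3 : P * n ≤ D ^ 2 * 16 * 64 * hh z by
      have h4 : P ≤ D ^ 2 * 16 * 64 * (n⁻¹ * hh z) := by
        have : P = n⁻¹ * (P * n) := by field_simp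
        rw [this]
        calc n⁻¹ * (P * n) ≤ n⁻¹ * (D ^ 2 * 16 * 64 * hh z) := by gcongr
          _ = _ := by ring
      have : 0 ≤ D ^ 2 * 16 * 64 * (n ^ 4 * (1 + (X * n ^ 2) ^ 2)⁻¹) := by positivity
      linarith
    have hD2 : 0 ≤ D ^ 2 := sq_nonneg D
    -- For `|z| ≤ 1` the loss `u ^ 5` is removed uniformly in `u` by comparing `u` with
    -- `w = |z|^(1/6)`; for `|z| > 1` it is absorbed using `u ≤ 2`.
    rcases le_or_gt |z| 1 with h3 | h3
    · set w := |z| ^ ((6 : ℕ) : ℝ)⁻¹ with hw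
      have hw0 : 0 < w := by have := abs_pos.2 h0; positivity
      have hw6 : w ^ 6 = |z| := rpow_inv_natCast_pow (abs_nonneg z) (by norm_num)
      have hw5 : |z| ^ (-(5 / 6) : ℝ) = (w ^ 5)⁻¹ := by
        rw [hw, ← rpow_natCast (|z| ^ _), ← rpow_mul (abs_nonneg z), ← rpow_neg (abs_nonneg z)]
        norm_num
      have hz2 : z ^ 2 = w ^ 12 := by rw [← sq_abs, ← hw6]; ring
      have h4 : P * n ≤ D ^ 2 * 16 * (w ^ 5)⁻¹ := by
        rw [← div_eq_mul_inv, le_div_iff₀ (by positivity)]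
        have h6 : u ^ 12 * w ^ 5 ≤ u ^ 5 * (u ^ 12 + w ^ 12) := by
          rcases le_total u w with h | h
          · have : u ^ 7 ≤ w ^ 7 := by gcongr
            calc u ^ 12 * w ^ 5 = u ^ 5 * (u ^ 7 * w ^ 5) := by ring
              _ ≤ u ^ 5 * (w ^ 7 * w ^ 5) := by gcongr
              _ ≤ _ := by
                rw [← pow_add]; gcongr
                have := pow_pos hu0 12
                norm_num
                linarith
          · have : w ^ 5 ≤ u ^ 5 := by gcongr
            calc u ^ 12 * w ^ 5 ≤ u ^ 12 * u ^ 5 := by gcongr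
              _ ≤ _ := by
                have : 0 ≤ u ^ 5 * w ^ 12 := by positivity
                linarith
        have h7 : u ^ 12 * (P * n * w ^ 5) ≤ u ^ 12 * (D ^ 2 * 16) := by
          calc u ^ 12 * (P * n * w ^ 5) = P * n * (u ^ 12 * w ^ 5) := by ring
            _ ≤ P * n * (u ^ 5 * (u ^ 12 + w ^ 12)) := by gcongr
            _ = P * (u ^ 5 * n) * (u ^ 12 + z ^ 2) := by rw [hz2]; ring
            _ ≤ _ := h2
            _ = _ := by ring
        exact le_of_mul_le_mul_left h7 (by positivity)
      have h8 : (w ^ 5)⁻¹ ≤ hh z := by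
        rw [hh, if_pos h3, hw5]
        have : 0 ≤ (1 + z ^ 2)⁻¹ := by positivity
        linarith
      have h9 : 0 ≤ (w ^ 5)⁻¹ := by positivity
      calc P * n ≤ D ^ 2 * 16 * (w ^ 5)⁻¹ := h4
        _ ≤ D ^ 2 * 16 * hh z := by gcongr
        _ ≤ _ := by
          have : 0 ≤ D ^ 2 * 16 * hh z := by positivity
          linarith
    · have hz1 : 1 ≤ z ^ 2 := by rw [← sq_abs]; nlinarith
      have h7 : P * n * z ^ 2 ≤ D ^ 2 * 16 * 8 := by
        have h8 : u ^ 5 * (P * n * z ^ 2) ≤ u ^ 5 * (D ^ 2 * 16 * u ^ 7) := by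
          have e : 0 ≤ P * (u ^ 5 * n) * u ^ 12 := by positivity
          linarith
        have h9 : u ^ 7 ≤ 8 := by
          calc u ^ 7 = u ^ 6 * u := by ring
            _ ≤ 4 * 2 := by gcongr
            _ = 8 := by norm_num
        refine (le_of_mul_le_mul_left h8 (by positivity)).trans ?_
        gcongr
      have h8 : P * n ≤ D ^ 2 * 16 * 64 * (1 + z ^ 2)⁻¹ := by
        rw [← div_eq_mul_inv, le_div_iff₀ (by positivity)]
        have h9 : P * n * 1 ≤ P * n * z ^ 2 := by gcongr
        have h10 : P * n * (1 + z ^ 2) = P * n * 1 + P * n * z ^ 2 := by ring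
        rw [h10]
        linarith
      rw [hh, if_neg (not_le.2 h3), zero_add]
      exact h8

end ZK

/-! ### Symmetrising coordinates -/

namespace ZK
open Real Filter Topology

lemma hh_neg (z : ℝ) : hh (-z) = hh z := by simp [hh]

lemma norm_kk_neg (j : ℕ) (N t y : ℝ) : ‖kk j N (-t) (-y)‖ = ‖kk j N t y‖ := by
  have : kk j N (-t) (-y) = (starRingEnd ℂ) (kk j N t y) := by
    simp only [kk]
    rw [← integral_conj]
    congr 1; funext a
    rw [map_mul, Complex.conj_ofReal, ph, ph, ← Complex.exp_conj, map_mul, Complex.conj_ofReal,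
      Complex.conj_I]
    congr 2
    push_cast; ring
  rw [this, RCLike.norm_conj]

/-- The majorant of the dyadic kernels. -/
def HH (n X : ℝ) : ℝ := n ^ 4 * (1 + (X * n ^ 2) ^ 2)⁻¹ + n⁻¹ * hh (X / n ^ 4)

lemma HH_neg (n X : ℝ) : HH n (-X) = HH n X := by
  rw [HH, neg_div, hh_neg, neg_mul, neg_sq, ← HH]

lemma HH_nonneg {n : ℝ} (hn : 0 < n) (X : ℝ) : 0 ≤ HH n X := by
  have := hh_nonneg (X / n ^ 4)
  unfold HH; positivity

/-- The product bound for both signs of time: reversing time conjugates the kernels. -/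
lemma kernel_bound_abs : ∃ C : ℝ, 0 ≤ C ∧ ∀ n t y₁ y₂ : ℝ, 1 ≤ n → |t| ≤ 4 →
    ‖kk 2 (n ^ 2) t y₁‖ * ‖kk 0 (n ^ 2) t y₂‖ ≤ C * HH n ((y₁ + y₂) / 2) := by
  obtain ⟨C, hC, h⟩ := kernel_bound
  refine ⟨C, hC, fun n t y₁ y₂ hn ht => ?_⟩
  rcases le_total 0 t with h0 | h0
  · exact h n t y₁ y₂ hn h0 (by rwa [abs_of_nonneg h0] at ht)
  · have := h n (-t) (-y₁) (-y₂) hn (by linarith) (by rwa [abs_of_nonpos h0] at ht)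
    rw [norm_kk_neg, norm_kk_neg, ← HH, ← neg_add, neg_div, HH_neg] at this
    exact this

/-- The product bound for the low-frequency piece. -/
lemma kernel_low_abs : ∃ C : ℝ, 0 ≤ C ∧ ∀ t y₁ y₂ : ℝ, |t| ≤ 4 →
    ‖kk 0 1 t y₁‖ * ‖kk 0 1 t y₂‖ ≤ C * (1 + ((y₁ + y₂) / 2) ^ 2)⁻¹ := by
  obtain ⟨D, hD, ha, -, -⟩ := kk_decay_bounds
  have key : ∀ t y₁ y₂ : ℝ, 0 ≤ t → t ≤ 4 →
      ‖kk 0 1 t y₁‖ * ‖kk 0 1 t y₂‖ ≤ D ^ 2 * 169 * (1 + ((y₁ + y₂) / 2) ^ 2)⁻¹ := by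
    intro t y₁ y₂ h0 h4
    have h := prod_decay (R' := 13) (norm_nonneg _) (norm_nonneg _) (by norm_num) (by norm_num) hD
      (by positivity) (by norm_num; linarith)
      (ha 1 t _ y₁ 0 (Or.inl rfl) one_pos h0 rfl)
      (ha 1 t _ y₂ 0 (Or.inl rfl) one_pos h0 rfl)
    rw [← div_eq_mul_inv, le_div_iff₀ (by positivity)]
    have : 0 ≤ ‖kk 0 1 t y₁‖ * ‖kk 0 1 t y₂‖ := by positivity
    norm_num at h
    nlinarith
  refine ⟨D ^ 2 * 169, by positivity, fun t y₁ y₂ ht => ?_⟩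
  rcases le_total 0 t with h0 | h0
  · exact key t y₁ y₂ h0 (by rwa [abs_of_nonneg h0] at ht)
  · have := key (-t) (-y₁) (-y₂) (by linarith) (by rwa [abs_of_nonpos h0] at ht)
    rw [norm_kk_neg, norm_kk_neg, ← neg_add, neg_div, neg_sq] at this
    exact this

/-- The coordinates `(a,b)` in which `ξ₁(ξ₁²+ξ₂²) = 4(a³+b³)`. -/
def symmEquiv : (ℝ × ℝ) ≃ₗ[ℝ] (ℝ × ℝ) where
  toFun p := (p.1 + p.2, √3 * (p.1 - p.2))
  invFun ξ := ((ξ.1 + ξ.2 / √3) / 2, (ξ.1 - ξ.2 / √3) / 2)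
  map_add' p q := by ext <;> simp <;> ring
  map_smul' c p := by ext <;> simp <;> ring
  left_inv p := by ext <;> simp
  right_inv ξ := by
    ext
    · simp; ring
    · have : √3 ≠ 0 := by positivity
      simp; field_simp; ring

/-- Change of variables to the symmetrising coordinates. -/
lemma symm_change : ∃ c : ℝ, 0 ≤ c ∧ (∀ f : ℝ × ℝ → ℂ, ∫ ξ, f ξ = c * ∫ p, f (symmEquiv p)) ∧
    ∀ f : ℝ × ℝ → ℝ, Integrable (fun p => f (symmEquiv p)) → Integrable f := by
  have hdet : LinearMap.det (symmEquiv : (ℝ × ℝ) →ₗ[ℝ] (ℝ × ℝ)) ≠ 0 :=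
    (LinearEquiv.isUnit_det' symmEquiv).ne_zero
  have hmap := Measure.map_linearMap_addHaar_eq_smul_addHaar (volume : Measure (ℝ × ℝ)) hdet
  set d := LinearMap.det (symmEquiv : (ℝ × ℝ) →ₗ[ℝ] (ℝ × ℝ)) with hd
  have hemb : MeasurableEmbedding (symmEquiv : ℝ × ℝ → ℝ × ℝ) :=
    (symmEquiv.toContinuousLinearEquiv).toHomeomorph.measurableEmbedding
  have hdp : 0 < |d⁻¹| := abs_pos.2 (inv_ne_zero hdet)
  refine ⟨|d|, abs_nonneg _, fun f => ?_, fun f hf => ?_⟩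
  · have h := hemb.integral_map (μ := volume) f
    have h' : ∫ y, f y ∂(Measure.map symmEquiv volume) = ∫ x, f (symmEquiv x) := h
    rw [← h']
    change _ = _ * ∫ y, f y ∂(Measure.map (symmEquiv : (ℝ × ℝ) →ₗ[ℝ] (ℝ × ℝ)) volume)
    rw [hmap, integral_smul_measure, ENNReal.toReal_ofReal hdp.le, abs_inv, Complex.real_smul,
      ← mul_assoc, ← Complex.ofReal_mul, mul_inv_cancel₀ (abs_ne_zero.2 hdet)]
    simp
  · have h : Integrable f (Measure.map symmEquiv volume) := hemb.integrable_map_iff.2 hf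
    change Integrable f (Measure.map (symmEquiv : (ℝ × ℝ) →ₗ[ℝ] (ℝ × ℝ)) volume) at h
    rw [hmap] at h
    rwa [integrable_smul_measure (ENNReal.ofReal_pos.2 hdp).ne' ENNReal.ofReal_ne_top] at h

/-- The phase `2π x·ξ + s ξ₁(ξ₁²+ξ₂²)`. -/
def Ph (s : ℝ) (x ξ : ℝ × ℝ) : ℝ :=
  2 * π * (x.1 * ξ.1 + x.2 * ξ.2) + s * ξ.1 * (ξ.1 ^ 2 + ξ.2 ^ 2)

/-- The unimodular factor `e^{i(2π x·ξ + s ξ₁(ξ₁²+ξ₂²))}`. -/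
def ee (s : ℝ) (x ξ : ℝ × ℝ) : ℂ := Complex.exp ((Ph s x ξ : ℂ) * Complex.I)

lemma norm_ee (s : ℝ) (x ξ : ℝ × ℝ) : ‖ee s x ξ‖ = 1 := Complex.norm_exp_ofReal_mul_I _

/-- The space-time kernel with frequency weight `v`. -/
def Ker (v : ℝ × ℝ → ℝ) (s : ℝ) (x : ℝ × ℝ) : ℂ := ∫ ξ, ee s x ξ * (v ξ : ℂ)

/-- Tensor-product amplitude in the symmetrising coordinates, at frequency scale `N`. -/
def wt (i j : ℕ) (N : ℝ) (ξ : ℝ × ℝ) : ℝ :=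
  psi i ((symmEquiv.symm ξ).1 / N) * psi j ((symmEquiv.symm ξ).2 / N)

lemma continuous_wt (i j : ℕ) (N : ℝ) : Continuous (wt i j N) := by
  have h : Continuous (symmEquiv.symm : ℝ × ℝ → ℝ × ℝ) :=
    LinearMap.continuous_of_finiteDimensional (symmEquiv.symm : (ℝ × ℝ) →ₗ[ℝ] (ℝ × ℝ))
  exact ((continuous_psi i).comp (h.fst.div_const N)).mul
    ((continuous_psi j).comp (h.snd.div_const N))

lemma ee_symmEquiv (s : ℝ) (x p : ℝ × ℝ) : ee s x (symmEquiv p)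
    = ph (4 * s) (2 * π * (x.1 + √3 * x.2)) p.1 * ph (4 * s) (2 * π * (x.1 - √3 * x.2)) p.2 := by
  have h3 : √3 ^ 2 = 3 := sq_sqrt (by norm_num)
  rw [ee, ph, ph, ← Complex.exp_add, ← add_mul, ← Complex.ofReal_add]
  congr 3
  simp only [Ph, symmEquiv, LinearEquiv.coe_mk, LinearMap.coe_mk, AddHom.coe_mk]
  linear_combination s * (p.1 + p.2) * (p.1 - p.2) ^ 2 * h3

/-- The space-time kernel of a tensor-product amplitude is, up to a constant, at most a product
of two one-dimensional kernels. -/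
lemma wt_facts : ∃ c : ℝ, 0 ≤ c ∧ ∀ (i j : ℕ) (N : ℝ), 0 < N → Integrable (wt i j N) ∧
    ∀ s x, ‖Ker (wt i j N) s x‖ ≤ c * (‖kk i N (4 * s) (2 * π * (x.1 + √3 * x.2))‖
      * ‖kk j N (4 * s) (2 * π * (x.1 - √3 * x.2))‖) := by
  obtain ⟨c, hc, h1, h2⟩ := symm_change
  refine ⟨c, hc, fun i j N hN => ⟨h2 _ ?_, fun s x => ?_⟩⟩
  · simp only [wt, LinearEquiv.symm_apply_apply]
    exact ((integrable_psi i).comp_div hN.ne').mul_prod ((integrable_psi j).comp_div hN.ne')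
  · rw [Ker, h1, norm_mul, Complex.norm_real, norm_of_nonneg hc]
    refine le_of_eq ?_
    congr 1
    rw [← norm_mul, kk, kk, ← integral_prod_mul]
    congr 2
    funext p
    rw [ee_symmEquiv, wt, LinearEquiv.symm_apply_apply]
    push_cast; ring

end ZK

/-! ### Dyadic decomposition of the weight -/

namespace ZK
open Real Filter Topology

/-- Smooth pieces of the weight `(1+|ξ|²)^{-7/9}`: a low-frequency Gaussian and, at each dyadic
scale `N = 2^k`, the amplitude `N^{-14/9} (ρ/N²) e^{-ρ/N²}`, where `ρ = a² + b²`. -/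
def vv : ℕ → ℝ × ℝ → ℝ
  | 0 => wt 0 0 1
  | k + 1 => fun ξ => ((2:ℝ) ^ k) ^ (-(14 / 9) : ℝ) * (wt 2 0 (2 ^ k) ξ + wt 0 2 (2 ^ k) ξ)

lemma psi_nonneg_of_even {j : ℕ} (hj : Even j) (x : ℝ) : 0 ≤ psi j x := by
  have := hj.pow_nonneg x
  unfold psi; positivity

lemma wt_nonneg {i j : ℕ} (hi : Even i) (hj : Even j) (N : ℝ) (ξ : ℝ × ℝ) : 0 ≤ wt i j N ξ :=
  mul_nonneg (psi_nonneg_of_even hi _) (psi_nonneg_of_even hj _)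

lemma vv_nonneg (k : ℕ) (ξ : ℝ × ℝ) : 0 ≤ vv k ξ := by
  cases k with
  | zero => exact wt_nonneg (by decide) (by decide) _ _
  | succ k =>
    have h1 := wt_nonneg (i := 2) (j := 0) (by decide) (by decide) (2 ^ k) ξ
    have h2 := wt_nonneg (i := 0) (j := 2) (by decide) (by decide) (2 ^ k) ξ
    simp only [vv]; positivity

lemma continuous_vv (k : ℕ) : Continuous (vv k) := by
  cases k with
  | zero => exact continuous_wt _ _ _
  | succ k => exact continuous_const.mul ((continuous_wt _ _ _).add (continuous_wt _ _ _))

/-- The majorant at frequency `N = n²` has mass `O(n³)`. -/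
lemma lintegral_HH {n : ℝ} (hn : 1 ≤ n) {c : ℝ} (hc : 0 ≤ c) :
    ∫⁻ x, ENNReal.ofReal (c * HH n (2 * π * x))
      ≤ ENNReal.ofReal (c * (n ^ 3 * (1 + ∫ z, hh z))) := by
  have hn0 : 0 < n := by linarith
  have hpi := pi_pos
  have hI : 0 ≤ ∫ z, hh z := integral_nonneg hh_nonneg
  have e1 : ∀ x, HH n (2 * π * x) = n ^ 4 * (1 + (x * (2 * π * n ^ 2)) ^ 2)⁻¹
      + n⁻¹ * hh (x * (2 * π / n ^ 4)) := by
    intro x; rw [HH]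
    congr 3
    · ring
    · ring
  have i1 : Integrable fun x : ℝ => n ^ 4 * (1 + (x * (2 * π * n ^ 2)) ^ 2)⁻¹ :=
    (integrable_inv_one_add_sq.comp_mul_right' (by positivity)).const_mul _
  have i2 : Integrable fun x : ℝ => n⁻¹ * hh (x * (2 * π / n ^ 4)) :=
    (integrable_hh.comp_mul_right' (by positivity)).const_mul _
  have i3 : Integrable fun x => c * HH n (2 * π * x) := by
    simp only [e1]; exact (i1.add i2).const_mul c
  rw [← ofReal_integral_eq_lintegral_ofReal i3
    (ae_of_all _ fun x => mul_nonneg hc (HH_nonneg hn0 _))]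
  apply ENNReal.ofReal_le_ofReal
  rw [integral_const_mul]
  gcongr
  simp only [e1]
  rw [integral_add i1 i2, integral_const_mul, integral_const_mul,
    Measure.integral_comp_mul_right (fun y : ℝ => (1 + y ^ 2)⁻¹),
    Measure.integral_comp_mul_right hh, integral_univ_inv_one_add_sq, abs_of_pos (by positivity),
    abs_of_pos (by positivity), smul_eq_mul, smul_eq_mul]
  have e2 : n ^ 4 * ((2 * π * n ^ 2)⁻¹ * π) = n ^ 2 / 2 := by field_simp
  have e3 : n⁻¹ * ((2 * π / n ^ 4)⁻¹ * ∫ z, hh z) = n ^ 3 * ((∫ z, hh z) / (2 * π)) := by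
    field_simp
  rw [e2, e3, mul_add]
  have h1 : n ^ 2 ≤ n ^ 3 := pow_le_pow_right₀ hn (by norm_num)
  have h2 : (∫ z, hh z) / (2 * π) ≤ ∫ z, hh z :=
    div_le_self hI (by linarith [pi_gt_three])
  have h3 : n ^ 3 * ((∫ z, hh z) / (2 * π)) ≤ n ^ 3 * ∫ z, hh z := by gcongr
  have : 0 ≤ n ^ 2 := by positivity
  linarith

/-- Each dyadic kernel is dominated by a function of `x₁` alone; the exponent `7/9` exceeds the
critical `3/4`, which makes the total mass `∑ N^{-14/9} N^{3/2}` finite. -/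
lemma weight_facts : ∃ H : ℕ → ℝ → ℝ≥0∞, (∀ k, Measurable (H k)) ∧
    (∑' k, ∫⁻ x, H k x ≠ ∞) ∧
    ∀ k, Integrable (vv k) ∧ ∀ s x, |s| ≤ 1 → ‖Ker (vv k) s x‖ₑ ≤ H k x.1 := by
  obtain ⟨c, hc, hw⟩ := wt_facts
  obtain ⟨C0, hC0, hlow⟩ := kernel_low_abs
  obtain ⟨C, hC, hker⟩ := kernel_bound_abs
  have hn2 : ∀ k : ℕ, (√2 ^ k) ^ 2 = (2:ℝ) ^ k := by
    intro k; rw [← pow_mul, mul_comm k, pow_mul, sq_sqrt (by norm_num)]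
  have hn1 : ∀ k : ℕ, 1 ≤ √2 ^ k := fun k => one_le_pow₀ (one_le_sqrt.2 (by norm_num))
  have hhm : Measurable hh := by
    unfold hh
    refine Measurable.add (Measurable.ite (measurableSet_le (by fun_prop) (by fun_prop)) ?_ ?_) ?_
      <;> fun_prop
  have hmid : ∀ x : ℝ × ℝ, (2 * π * (x.1 + √3 * x.2) + 2 * π * (x.1 - √3 * x.2)) / 2
      = 2 * π * x.1 := fun x => by ring
  have hmid' : ∀ x : ℝ × ℝ, (2 * π * (x.1 - √3 * x.2) + 2 * π * (x.1 + √3 * x.2)) / 2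
      = 2 * π * x.1 := fun x => by ring
  have hs4 : ∀ s : ℝ, |s| ≤ 1 → |4 * s| ≤ 4 := fun s hs => by
    rw [abs_mul, abs_of_pos (by norm_num : (0:ℝ) < 4)]; linarith
  refine ⟨fun k => match k with
    | 0 => fun x => ENNReal.ofReal (c * C0 * (1 + (x * (2 * π)) ^ 2)⁻¹)
    | k + 1 => fun x => ENNReal.ofReal
        (((2:ℝ) ^ k) ^ (-(14 / 9) : ℝ) * (2 * c * C) * HH (√2 ^ k) (2 * π * x)), ?_, ?_, ?_⟩
  · intro k
    cases k with
    | zero => fun_prop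
    | succ k => simp only [HH]; fun_prop
  · rw [tsum_eq_zero_add' ENNReal.summable]
    refine ENNReal.add_ne_top.2 ⟨?_, ?_⟩
    · have hi : Integrable fun x : ℝ => c * C0 * (1 + (x * (2 * π)) ^ 2)⁻¹ :=
        (integrable_inv_one_add_sq.comp_mul_right' (by positivity)).const_mul _
      exact hi.lintegral_lt_top.ne
    · set q : ℝ := 2 ^ (-(1 / 18) : ℝ) with hq
      set I := ∫ z, hh z with hIdef
      have hI : 0 ≤ I := integral_nonneg hh_nonneg
      have hterm : ∀ k : ℕ, ∫⁻ x, ENNReal.ofReal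
          (((2:ℝ) ^ k) ^ (-(14 / 9) : ℝ) * (2 * c * C) * HH (√2 ^ k) (2 * π * x))
          ≤ ENNReal.ofReal (2 * c * C * (1 + I)) * (ENNReal.ofReal q) ^ k := by
        intro k
        refine (lintegral_HH (hn1 k) (by positivity)).trans ?_
        rw [← ENNReal.ofReal_pow (by positivity), ← ENNReal.ofReal_mul (by positivity)]
        apply ENNReal.ofReal_le_ofReal
        have e : ((2:ℝ) ^ k) ^ (-(14 / 9) : ℝ) * (√2 ^ k) ^ 3 = q ^ k := by
          rw [hq, sqrt_eq_rpow]
          simp only [← rpow_natCast, ← rpow_mul (zero_le_two (α := ℝ))]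
          rw [← rpow_add two_pos]
          congr 1
          push_cast; ring
        rw [← e]
        apply le_of_eq; ring
      refine ne_top_of_le_ne_top ?_ (ENNReal.tsum_le_tsum hterm)
      rw [ENNReal.tsum_mul_left, ENNReal.tsum_geometric]
      refine ENNReal.mul_ne_top ENNReal.ofReal_ne_top (ENNReal.inv_ne_top.2 ?_)
      rw [Ne, tsub_eq_zero_iff_le, not_le, ENNReal.ofReal_lt_one]
      exact rpow_lt_one_of_one_lt_of_neg (by norm_num) (by norm_num)
  · intro k
    cases k with
    | zero =>
      refine ⟨(hw 0 0 1 one_pos).1, fun s x hs => ?_⟩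
      rw [← ofReal_norm]
      apply ENNReal.ofReal_le_ofReal
      refine ((hw 0 0 1 one_pos).2 s x).trans ?_
      have := hlow (4 * s) (2 * π * (x.1 + √3 * x.2)) (2 * π * (x.1 - √3 * x.2)) (hs4 s hs)
      rw [hmid] at this
      rw [mul_assoc c, mul_comm x.1]
      exact mul_le_mul_of_nonneg_left this hc
    | succ k =>
      have hN : (0:ℝ) < 2 ^ k := by positivity
      have h20 := hw 2 0 (2 ^ k) hN
      have h02 := hw 0 2 (2 ^ k) hN
      refine ⟨(h20.1.add h02.1).const_mul _, fun s x hs => ?_⟩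
      rw [← ofReal_norm]
      apply ENNReal.ofReal_le_ofReal
      have hi : ∀ f : ℝ × ℝ → ℝ, Integrable f → Integrable fun ξ => ee s x ξ * (f ξ : ℂ) := by
        intro f hf
        refine hf.ofReal.bdd_mul (c := 1) ?_ (ae_of_all _ fun a => (norm_ee s x a).le)
        refine Continuous.aestronglyMeasurable ?_
        unfold ee Ph; fun_prop
      have e : Ker (vv (k + 1)) s x = (((2:ℝ) ^ k) ^ (-(14 / 9) : ℝ) : ℝ)
          * (Ker (wt 2 0 (2 ^ k)) s x + Ker (wt 0 2 (2 ^ k)) s x) := by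
        simp only [Ker]
        rw [← integral_add (hi _ h20.1) (hi _ h02.1), ← integral_const_mul]
        congr 1; funext ξ
        simp only [vv]; push_cast; ring
      rw [e, norm_mul, Complex.norm_real, norm_of_nonneg (by positivity), mul_assoc]
      refine mul_le_mul_of_nonneg_left ?_ (by positivity)
      refine (norm_add_le _ _).trans ?_
      have k1 := hker (√2 ^ k) (4 * s) (2 * π * (x.1 + √3 * x.2)) (2 * π * (x.1 - √3 * x.2))
        (hn1 k) (hs4 s hs)
      have k2 := hker (√2 ^ k) (4 * s) (2 * π * (x.1 - √3 * x.2)) (2 * π * (x.1 + √3 * x.2))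
        (hn1 k) (hs4 s hs)
      rw [hn2] at k1 k2
      rw [hmid] at k1
      rw [hmid', mul_comm ‖kk 2 _ _ _‖] at k2
      have l1 := (h20.2 s x).trans (mul_le_mul_of_nonneg_left k1 hc)
      have l2 := (h02.2 s x).trans (mul_le_mul_of_nonneg_left k2 hc)
      linarith

/-- The dyadic pieces add up to at least a multiple of the weight `(1+|ξ|²)^{-7/9}`. -/
lemma weight_lower (ξ : ℝ × ℝ) : ENNReal.ofReal ((1 + ξ.1 ^ 2 + ξ.2 ^ 2) ^ (-(7 / 9) : ℝ))
    ≤ ENNReal.ofReal (exp 4) * ∑' k, ENNReal.ofReal (vv k ξ) := by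
  suffices h : ∃ k, (1 + ξ.1 ^ 2 + ξ.2 ^ 2) ^ (-(7 / 9) : ℝ) ≤ exp 4 * vv k ξ by
    obtain ⟨k, hk⟩ := h
    refine (ENNReal.ofReal_le_ofReal hk).trans ?_
    rw [ENNReal.ofReal_mul (exp_pos _).le]
    gcongr
    exact ENNReal.le_tsum k
  set a := (symmEquiv.symm ξ).1 with ha
  set b := (symmEquiv.symm ξ).2 with hb
  set ρ := a ^ 2 + b ^ 2 with hρ
  have hρ0 : 0 ≤ ρ := by positivity
  have hρξ : ρ ≤ 1 + ξ.1 ^ 2 + ξ.2 ^ 2 := by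
    have h3 : (ξ.2 / √3) ^ 2 = ξ.2 ^ 2 / 3 := by rw [div_pow, sq_sqrt (by norm_num)]
    have e1 : a = (ξ.1 + ξ.2 / √3) / 2 := rfl
    have e2 : b = (ξ.1 - ξ.2 / √3) / 2 := rfl
    have : ρ = (ξ.1 ^ 2 + ξ.2 ^ 2 / 3) / 2 := by rw [hρ, e1, e2, ← h3]; ring
    rw [this]; nlinarith [sq_nonneg ξ.1, sq_nonneg ξ.2]
  have hW1 : (1 + ξ.1 ^ 2 + ξ.2 ^ 2) ^ (-(7 / 9) : ℝ) ≤ 1 :=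
    rpow_le_one_of_one_le_of_nonpos (by nlinarith [sq_nonneg ξ.1, sq_nonneg ξ.2]) (by norm_num)
  rcases le_or_gt 1 ρ with h1 | h1
  · obtain ⟨k, hk1, hk2⟩ := exists_nat_pow_near h1 (by norm_num : (1:ℝ) < 4)
    refine ⟨k + 1, ?_⟩
    have h4 : (4:ℝ) ^ k = (2 ^ k) ^ 2 := by rw [← pow_mul, mul_comm, pow_mul]; norm_num
    set N : ℝ := 2 ^ k with hN
    have hN0 : 0 < N := by positivity
    have e : vv (k + 1) ξ = N ^ (-(14 / 9) : ℝ) * (ρ / N ^ 2 * exp (-(ρ / N ^ 2))) := by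
      simp only [vv, wt, psi, ← ha, ← hb, ← hN]
      have : -(ρ / N ^ 2) = -(a / N) ^ 2 + -(b / N) ^ 2 := by rw [hρ]; field_simp; ring
      rw [this, exp_add, hρ]
      field_simp
    have hN9 : N ^ (-(14 / 9) : ℝ) = (N ^ 2) ^ (-(7 / 9) : ℝ) := by
      rw [← rpow_natCast, ← rpow_mul hN0.le]; norm_num
    have l1 : (1 + ξ.1 ^ 2 + ξ.2 ^ 2) ^ (-(7 / 9) : ℝ) ≤ (N ^ 2) ^ (-(7 / 9) : ℝ) :=
      rpow_le_rpow_of_nonpos (by positivity) (by linarith) (by norm_num)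
    have l2 : 1 ≤ ρ / N ^ 2 := by rw [le_div_iff₀ (by positivity)]; linarith
    have l3 : ρ / N ^ 2 ≤ 4 := by
      rw [div_le_iff₀ (by positivity), ← h4]
      rw [pow_succ] at hk2; linarith
    have l4 : exp (-4) ≤ exp (-(ρ / N ^ 2)) := exp_le_exp.2 (by linarith)
    rw [e, hN9]
    calc _ ≤ (N ^ 2) ^ (-(7 / 9) : ℝ) := l1
      _ = exp 4 * ((N ^ 2) ^ (-(7 / 9) : ℝ) * (1 * exp (-4))) := by
        rw [exp_neg]; field_simp
      _ ≤ _ := by gcongr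
  · refine ⟨0, hW1.trans ?_⟩
    have e : vv 0 ξ = exp (-ρ) := by
      simp only [vv, wt, psi, ← ha, ← hb, pow_zero, one_mul, div_one]
      rw [← exp_add, hρ]; congr 1; ring
    rw [e, ← exp_add]
    exact one_le_exp (by linarith)

end ZK

/-! ### The linearised maximal estimate -/

namespace ZK
open Real Filter Topology

/-- The group law behind `TT*`: the composition has a kernel depending on differences only. -/
lemma ee_sub (s s' : ℝ) (x x' ξ : ℝ × ℝ) :
    ee (s - s') (x - x') ξ = ee s x ξ * (starRingEnd ℂ) (ee s' x' ξ) := by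
  simp only [ee, ← Complex.exp_conj, map_mul, Complex.conj_I, Complex.conj_ofReal,
    ← Complex.exp_add]
  congr 1
  simp only [Ph, Prod.fst_sub, Prod.snd_sub]
  push_cast; ring

lemma measurable_ee : Measurable fun q : ℝ × (ℝ × ℝ) × (ℝ × ℝ) => ee q.1 q.2.1 q.2.2 := by
  refine Continuous.measurable ?_
  unfold ee Ph; fun_prop

lemma measurable_ee_comp {α : Type*} [MeasurableSpace α] {a : α → ℝ} {b c : α → ℝ × ℝ}
    (ha : Measurable a) (hb : Measurable b) (hc : Measurable c) :
    Measurable fun q => ee (a q) (b q) (c q) :=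
  measurable_ee.comp (ha.prodMk (hb.prodMk hc))

/-- The adjoint of the linearised maximal operator `f ↦ (U(S(x))f)(x, X₂(x))`, on the Fourier
side. -/
def EE (X2 S : ℝ → ℝ) (h : ℝ → ℂ) (ξ : ℝ × ℝ) : ℂ := ∫ x, h x * ee (S x) (x, X2 x) ξ

set_option maxHeartbeats 1000000 in
/-- The `TT*` argument: a kernel dominated by an integrable function of `x₁` bounds the adjoint
operator with values in the weighted `L²`. -/
lemma tt_star {v : ℝ × ℝ → ℝ} (hv0 : ∀ ξ, 0 ≤ v ξ) (hvi : Integrable v) {H : ℝ → ℝ≥0∞}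
    (hH : Measurable H) (hK : ∀ s x, |s| ≤ 1 → ‖Ker v s x‖ₑ ≤ H x.1) {X2 S : ℝ → ℝ}
    (hX : Measurable X2) (hS : Measurable S) (hS01 : ∀ x, S x ∈ Set.Icc (0:ℝ) 1)
    {h : ℝ → ℂ} (hhm : Measurable h) (hh : Integrable h) :
    ∫⁻ ξ, ‖EE X2 S h ξ‖ₑ ^ 2 * ENNReal.ofReal (v ξ)
      ≤ 2 * (∫⁻ x, H x) * ∫⁻ x, ‖h x‖ₑ ^ 2 := by
  set F : (ℝ × ℝ) × (ℝ × ℝ) → ℂ := fun q =>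
    ee (S q.2.1 - S q.2.2) (q.2.1 - q.2.2, X2 q.2.1 - X2 q.2.2) q.1 *
      ((v q.1 : ℂ) * (h q.2.1 * (starRingEnd ℂ) (h q.2.2))) with hF
  have hconj : Integrable fun x => (starRingEnd ℂ) (h x) :=
    hh.congr' (Complex.continuous_conj.measurable.comp hhm).aestronglyMeasurable
      (ae_of_all _ fun x => (RCLike.norm_conj (h x)).symm)
  have hp : Integrable fun p : ℝ × ℝ => h p.1 * (starRingEnd ℂ) (h p.2) := hh.mul_prod hconj
  have hFi : Integrable F (volume.prod volume) := by
    have h1 : Integrable (fun q : (ℝ × ℝ) × (ℝ × ℝ) =>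
        (v q.1 : ℂ) * (h q.2.1 * (starRingEnd ℂ) (h q.2.2))) (volume.prod volume) :=
      hvi.ofReal.mul_prod hp
    refine h1.bdd_mul (c := 1) ?_ (ae_of_all _ fun q => (norm_ee _ _ _).le)
    refine Measurable.aestronglyMeasurable ?_
    exact measurable_ee_comp (by fun_prop) (by fun_prop) (by fun_prop)
  have h1 : ∀ ξ, ∫ p, F (ξ, p) = ((‖EE X2 S h ξ‖ ^ 2 * v ξ : ℝ) : ℂ) := by
    intro ξ
    have e : ∀ p : ℝ × ℝ, F (ξ, p) = v ξ * ((h p.1 * ee (S p.1) (p.1, X2 p.1) ξ)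
        * (starRingEnd ℂ) (h p.2 * ee (S p.2) (p.2, X2 p.2) ξ)) := by
      intro p
      have := ee_sub (S p.1) (S p.2) (p.1, X2 p.1) (p.2, X2 p.2) ξ
      rw [Prod.mk_sub_mk] at this
      simp only [hF, this, map_mul]
      ring
    simp only [e]
    rw [integral_const_mul]
    have := integral_prod_mul (μ := (volume : Measure ℝ)) (ν := (volume : Measure ℝ))
      (fun x => h x * ee (S x) (x, X2 x) ξ)
      (fun x => (starRingEnd ℂ) (h x * ee (S x) (x, X2 x) ξ))
    rw [Measure.volume_eq_prod, this, integral_conj, ← EE, Complex.mul_conj,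
      Complex.normSq_eq_norm_sq]
    push_cast; ring
  have h2 : ∀ p : ℝ × ℝ, ∫ ξ, F (ξ, p) = h p.1 * (starRingEnd ℂ) (h p.2)
      * Ker v (S p.1 - S p.2) (p.1 - p.2, X2 p.1 - X2 p.2) := by
    intro p
    rw [Ker, ← integral_const_mul]
    congr 1; funext ξ
    simp only [hF]; ring
  have h3 : ∫⁻ ξ, ‖EE X2 S h ξ‖ₑ ^ 2 * ENNReal.ofReal (v ξ) = ‖∫ q, F q ∂(volume.prod volume)‖ₑ := by
    rw [integral_prod F hFi]
    have hi := hFi.integral_prod_left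
    simp only [h1] at hi ⊢
    have hi' : Integrable fun ξ => ‖EE X2 S h ξ‖ ^ 2 * v ξ := by
      refine hi.re.congr (ae_of_all _ fun ξ => ?_)
      exact Complex.ofReal_re _
    have hnn : ∀ ξ, 0 ≤ ‖EE X2 S h ξ‖ ^ 2 * v ξ := fun ξ => mul_nonneg (sq_nonneg _) (hv0 ξ)
    rw [integral_complex_ofReal, ← ofReal_norm, Complex.norm_real, norm_of_nonneg (integral_nonneg hnn),
      ofReal_integral_eq_lintegral_ofReal hi' (ae_of_all _ hnn)]
    refine lintegral_congr fun ξ => ?_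
    rw [ENNReal.ofReal_mul (sq_nonneg _), ENNReal.ofReal_pow (norm_nonneg _), ofReal_norm]
  have hm1 : Measurable fun p : ℝ × ℝ => ‖h p.1‖ₑ ^ 2 * H (p.1 - p.2) := by fun_prop
  have hm2 : Measurable fun p : ℝ × ℝ => ‖h p.2‖ₑ ^ 2 * H (p.1 - p.2) := by fun_prop
  rw [h3, integral_prod_symm F hFi]
  simp only [h2]
  calc _ ≤ ∫⁻ p : ℝ × ℝ, ‖h p.1 * (starRingEnd ℂ) (h p.2)
        * Ker v (S p.1 - S p.2) (p.1 - p.2, X2 p.1 - X2 p.2)‖ₑ := enorm_integral_le_lintegral_enorm _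
    _ ≤ ∫⁻ p : ℝ × ℝ, (‖h p.1‖ₑ ^ 2 * H (p.1 - p.2) + ‖h p.2‖ₑ ^ 2 * H (p.1 - p.2)) := by
      refine lintegral_mono fun p => ?_
      have hs : |S p.1 - S p.2| ≤ 1 := by
        have a1 := hS01 p.1; have a2 := hS01 p.2
        rw [abs_le]; constructor <;> linarith [a1.1, a1.2, a2.1, a2.2]
      have := hK _ (p.1 - p.2, X2 p.1 - X2 p.2) hs
      simp only [enorm_mul, RCLike.enorm_conj]
      rw [← add_mul]
      gcongr
      rcases le_total ‖h p.1‖ₑ ‖h p.2‖ₑ with hle | hle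
      · calc ‖h p.1‖ₑ * ‖h p.2‖ₑ ≤ ‖h p.2‖ₑ * ‖h p.2‖ₑ := by gcongr
          _ ≤ _ := by rw [← sq]; exact le_add_self
      · calc ‖h p.1‖ₑ * ‖h p.2‖ₑ ≤ ‖h p.1‖ₑ * ‖h p.1‖ₑ := by gcongr
          _ ≤ _ := by rw [← sq]; exact le_self_add
    _ = (∫⁻ x, ∫⁻ x', ‖h x‖ₑ ^ 2 * H (x - x')) + ∫⁻ x', ∫⁻ x, ‖h x'‖ₑ ^ 2 * H (x - x') := by
      rw [lintegral_add_left hm1, Measure.volume_eq_prod, lintegral_prod _ hm1.aemeasurable,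
        lintegral_prod_symm _ hm2.aemeasurable]
    _ = _ := by
      have e1 : ∀ x, ∫⁻ x', ‖h x‖ₑ ^ 2 * H (x - x') = ‖h x‖ₑ ^ 2 * ∫⁻ y, H y := by
        intro x
        rw [lintegral_const_mul _ (by fun_prop), lintegral_sub_left_eq_self H x]
      have e2 : ∀ x', ∫⁻ x, ‖h x'‖ₑ ^ 2 * H (x - x') = ‖h x'‖ₑ ^ 2 * ∫⁻ y, H y := by
        intro x'
        rw [lintegral_const_mul _ (by fun_prop), lintegral_sub_right_eq_self H x']
      simp only [e1, e2]
      rw [lintegral_mul_const _ (by fun_prop)]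
      ring

lemma measurable_EE {X2 S : ℝ → ℝ} (hX : Measurable X2) (hS : Measurable S)
    {h : ℝ → ℂ} (hhm : Measurable h) : Measurable (EE X2 S h) := by
  unfold EE
  have : StronglyMeasurable (Function.uncurry fun (ξ : ℝ × ℝ) (x : ℝ) =>
      h x * ee (S x) (x, X2 x) ξ) := by
    refine Measurable.stronglyMeasurable ?_
    refine Measurable.mul (by fun_prop) ?_
    exact measurable_ee_comp (by fun_prop) (by fun_prop) (by fun_prop)
  exact this.integral_prod_right.measurable

/-- The adjoint estimate, after summing the pieces of the weight. -/
lemma adjoint_bound : ∃ C : ℝ≥0∞, C ≠ ∞ ∧ ∀ X2 S : ℝ → ℝ, Measurable X2 → Measurable S →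
    (∀ x, S x ∈ Set.Icc (0:ℝ) 1) → ∀ h : ℝ → ℂ, Measurable h → Integrable h →
    ∫⁻ ξ : ℝ × ℝ, ‖EE X2 S h ξ‖ₑ ^ 2 * ENNReal.ofReal ((1 + ξ.1 ^ 2 + ξ.2 ^ 2) ^ (-(7 / 9) : ℝ))
      ≤ C * ∫⁻ x, ‖h x‖ₑ ^ 2 := by
  obtain ⟨H, hHm, hsum, hH⟩ := weight_facts
  refine ⟨ENNReal.ofReal (exp 4) * (2 * ∑' k, ∫⁻ x, H k x),
    ENNReal.mul_ne_top ENNReal.ofReal_ne_top (ENNReal.mul_ne_top (by norm_num) hsum), ?_⟩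
  intro X2 S hX hS hS01 h hhm hh
  have hE := measurable_EE hX hS hhm
  calc _ ≤ ∫⁻ ξ : ℝ × ℝ, ENNReal.ofReal (exp 4)
        * ∑' k, ‖EE X2 S h ξ‖ₑ ^ 2 * ENNReal.ofReal (vv k ξ) := by
        refine lintegral_mono fun ξ => ?_
        rw [ENNReal.tsum_mul_left, mul_left_comm]
        gcongr
        exact weight_lower ξ
    _ = ENNReal.ofReal (exp 4)
        * ∑' k, ∫⁻ ξ : ℝ × ℝ, ‖EE X2 S h ξ‖ₑ ^ 2 * ENNReal.ofReal (vv k ξ) := by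
        have hm : ∀ k, Measurable fun ξ : ℝ × ℝ =>
            ‖EE X2 S h ξ‖ₑ ^ 2 * ENNReal.ofReal (vv k ξ) := fun k => by
          have := (continuous_vv k).measurable
          fun_prop
        rw [lintegral_const_mul' _ _ ENNReal.ofReal_ne_top,
          lintegral_tsum fun k => (hm k).aemeasurable]
    _ ≤ ENNReal.ofReal (exp 4) * ∑' k, 2 * (∫⁻ x, H k x) * ∫⁻ x, ‖h x‖ₑ ^ 2 := by
        gcongr with k
        exact tt_star (vv_nonneg k) (hH k).1 (hHm k) (hH k).2 hX hS hS01 hhm hh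
    _ = _ := by
        rw [ENNReal.tsum_mul_right, ENNReal.tsum_mul_left]; ring

set_option maxHeartbeats 2000000 in
/-- The linearised maximal estimate: duality between the operator and its adjoint `EE`. -/
lemma linearized_bound : ∃ C : ℝ≥0∞, C ≠ ∞ ∧ ∀ X2 S : ℝ → ℝ, Measurable X2 → Measurable S →
    (∀ x, S x ∈ Set.Icc (0:ℝ) 1) → ∀ f : ℝ × ℝ → ℂ, Measurable f → Integrable f →
    ∫⁻ x, ‖∫ ξ, ee (S x) (x, X2 x) ξ * f ξ‖ₑ ^ 2
      ≤ C * ∫⁻ ξ : ℝ × ℝ, ENNReal.ofReal ((1 + ξ.1 ^ 2 + ξ.2 ^ 2) ^ ((7:ℝ) / 9)) * ‖f ξ‖ₑ ^ 2 := by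
  obtain ⟨C, hC, hadj⟩ := adjoint_bound
  refine ⟨C, hC, ?_⟩
  intro X2 S hX hS hS01 f hfm hf
  set G : ℝ → ℂ := fun x => ∫ ξ, ee (S x) (x, X2 x) ξ * f ξ with hG
  have hee : Measurable fun q : ℝ × (ℝ × ℝ) => ee (S q.1) (q.1, X2 q.1) q.2 :=
    measurable_ee_comp (by fun_prop) (by fun_prop) (by fun_prop)
  have hGm : Measurable G := by
    have : StronglyMeasurable (Function.uncurry fun (x : ℝ) (ξ : ℝ × ℝ) =>
        ee (S x) (x, X2 x) ξ * f ξ) :=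
      Measurable.stronglyMeasurable (hee.mul (by fun_prop))
    exact this.integral_prod_right.measurable
  have hGb : ∀ x, ‖G x‖ ≤ ∫ ξ, ‖f ξ‖ := fun x => by
    refine (norm_integral_le_integral_norm _).trans (le_of_eq ?_)
    congr 1; funext ξ; rw [norm_mul, norm_ee, one_mul]
  set J := ∫⁻ ξ : ℝ × ℝ, ENNReal.ofReal ((1 + ξ.1 ^ 2 + ξ.2 ^ 2) ^ ((7:ℝ) / 9)) * ‖f ξ‖ₑ ^ 2 with hJ
  have key : ∀ R : ℕ, ∫⁻ x in Set.Icc (-R : ℝ) R, ‖G x‖ₑ ^ 2 ≤ C * J := by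
    intro R
    set I := ∫⁻ x in Set.Icc (-R : ℝ) R, ‖G x‖ₑ ^ 2 with hI
    set h : ℝ → ℂ := (Set.Icc (-R : ℝ) R).indicator fun x => (starRingEnd ℂ) (G x) with hh
    have hcm : Measurable fun x => (starRingEnd ℂ) (G x) :=
      Complex.continuous_conj.measurable.comp hGm
    have hhm : Measurable h := hcm.indicator measurableSet_Icc
    have hhi : Integrable h := by
      rw [hh, integrable_indicator_iff measurableSet_Icc]
      refine Measure.integrableOn_of_bounded (M := ∫ ξ, ‖f ξ‖) ?_ hcm.aestronglyMeasurable
        (ae_of_all _ fun x => ?_)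
      · simp
      · rw [RCLike.norm_conj]; exact hGb x
    have hhI : ∫⁻ x, ‖h x‖ₑ ^ 2 = I := by
      rw [hI, ← lintegral_indicator measurableSet_Icc]
      refine lintegral_congr fun x => ?_
      by_cases hx : x ∈ Set.Icc (-R : ℝ) R <;> simp [hh, hx]
    have hIfin : I ≠ ∞ := by
      rw [hI]
      refine ne_top_of_le_ne_top ?_ (setLIntegral_mono measurable_const
        (g := fun _ => (ENNReal.ofReal (∫ ξ, ‖f ξ‖)) ^ 2) fun x _ => ?_)
      · rw [setLIntegral_const]
        exact ENNReal.mul_ne_top (by simp) (by simp)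
      · gcongr
        rw [← ofReal_norm]
        exact ENNReal.ofReal_le_ofReal (hGb x)
    -- `I` is the pairing of `f` with the adjoint applied to `h`
    have hdual : I ≤ ∫⁻ ξ, ‖f ξ‖ₑ * ‖EE X2 S h ξ‖ₑ := by
      have e1 : ∫ x, h x * G x = ∫ ξ, f ξ * EE X2 S h ξ := by
        have hi : Integrable (Function.uncurry fun (x : ℝ) (ξ : ℝ × ℝ) =>
            ee (S x) (x, X2 x) ξ * (h x * f ξ)) (volume.prod volume) :=
          (hhi.mul_prod hf).bdd_mul (c := 1) hee.aestronglyMeasurable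
            (ae_of_all _ fun q => (norm_ee _ _ _).le)
        have := integral_integral_swap hi
        calc ∫ x, h x * G x = ∫ x, ∫ ξ, ee (S x) (x, X2 x) ξ * (h x * f ξ) := by
              congr 1; funext x
              rw [hG, ← integral_const_mul]
              congr 1; funext ξ; ring
          _ = _ := this
          _ = _ := by
              congr 1; funext ξ
              rw [EE, ← integral_const_mul]
              congr 1; funext x; ring
      have e2 : ∫ x, h x * G x = ((∫ x, ‖h x‖ ^ 2 : ℝ) : ℂ) := by
        rw [← integral_complex_ofReal]
        congr 1; funext x
        by_cases hx : x ∈ Set.Icc (-R : ℝ) R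
        · simp only [hh, Set.indicator_of_mem hx]
          rw [mul_comm, Complex.mul_conj, Complex.normSq_eq_norm_sq, RCLike.norm_conj]
        · simp [hh, hx]
      have e3 : I = ‖∫ x, h x * G x‖ₑ := by
        have hi2 : Integrable fun x => ‖h x‖ ^ 2 := by
          have : Integrable fun x => ‖h x‖ * ‖h x‖ := by
            refine hhi.norm.bdd_mul (c := ∫ ξ, ‖f ξ‖) hhi.norm.aestronglyMeasurable
              (ae_of_all _ fun x => ?_)
            rw [norm_norm]
            by_cases hx : x ∈ Set.Icc (-R : ℝ) R
            · simp only [hh, Set.indicator_of_mem hx, RCLike.norm_conj]; exact hGb x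
            · simp only [hh, Set.indicator_of_notMem hx, norm_zero]
              exact integral_nonneg fun _ => norm_nonneg _
          simpa only [sq] using this
        rw [e2, ← hhI, ← ofReal_norm, Complex.norm_real,
          norm_of_nonneg (integral_nonneg fun x => by positivity),
          ofReal_integral_eq_lintegral_ofReal hi2 (ae_of_all _ fun x => by positivity)]
        refine lintegral_congr fun x => ?_
        rw [ENNReal.ofReal_pow (norm_nonneg _), ofReal_norm]
      rw [e3, e1]
      refine (enorm_integral_le_lintegral_enorm _).trans (le_of_eq ?_)
      simp only [enorm_mul]
    have hEm := measurable_EE hX hS hhm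
    have hA := hadj X2 S hX hS hS01 h hhm hhi
    rw [hhI] at hA
    -- Cauchy–Schwarz with the weight split evenly
    set w : ℝ × ℝ → ℝ≥0∞ := fun ξ => ENNReal.ofReal ((1 + ξ.1 ^ 2 + ξ.2 ^ 2) ^ ((7:ℝ) / 18)) with hw
    set w' : ℝ × ℝ → ℝ≥0∞ :=
      fun ξ => ENNReal.ofReal ((1 + ξ.1 ^ 2 + ξ.2 ^ 2) ^ (-(7 / 18) : ℝ)) with hw'
    have hpos : ∀ ξ : ℝ × ℝ, 0 < 1 + ξ.1 ^ 2 + ξ.2 ^ 2 := fun ξ => by positivity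
    have hww : ∀ ξ, w ξ * w' ξ = 1 := fun ξ => by
      have := hpos ξ
      rw [hw, hw', ← ENNReal.ofReal_mul (by positivity), ← rpow_add (hpos ξ)]; simp
    have hw2 : ∀ ξ : ℝ × ℝ, (w ξ) ^ 2 = ENNReal.ofReal ((1 + ξ.1 ^ 2 + ξ.2 ^ 2) ^ ((7:ℝ) / 9)) := fun ξ => by
      have := hpos ξ
      rw [hw, ← ENNReal.ofReal_pow (by positivity), ← rpow_natCast, ← rpow_mul (hpos ξ).le]
      norm_num
    have hw2' : ∀ ξ : ℝ × ℝ, (w' ξ) ^ 2 = ENNReal.ofReal ((1 + ξ.1 ^ 2 + ξ.2 ^ 2) ^ (-(7 / 9) : ℝ)) := fun ξ => by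
      have := hpos ξ
      rw [hw', ← ENNReal.ofReal_pow (by positivity), ← rpow_natCast, ← rpow_mul (hpos ξ).le]
      norm_num
    have hwm : Measurable w := by rw [hw]; fun_prop
    have hwm' : Measurable w' := by rw [hw']; fun_prop
    have hCS : ∫⁻ ξ, ‖f ξ‖ₑ * ‖EE X2 S h ξ‖ₑ ≤ J ^ (1 / 2 : ℝ) * (C * I) ^ (1 / 2 : ℝ) := by
      have hcs := ENNReal.lintegral_mul_le_Lp_mul_Lq (volume : Measure (ℝ × ℝ))
        (Real.HolderConjugate.two_two) (f := fun ξ => w ξ * ‖f ξ‖ₑ)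
        (g := fun ξ => ‖EE X2 S h ξ‖ₑ * w' ξ) (by fun_prop) (by fun_prop)
      refine le_trans (le_of_eq ?_) (hcs.trans ?_)
      · refine lintegral_congr fun ξ => ?_
        simp only [Pi.mul_apply]
        calc _ = (w ξ * w' ξ) * (‖f ξ‖ₑ * ‖EE X2 S h ξ‖ₑ) := by rw [hww, one_mul]
          _ = _ := by ring
      · gcongr
        · rw [hJ]
          refine lintegral_mono fun ξ => le_of_eq ?_
          simp only [ENNReal.rpow_ofNat, mul_pow, hw2]
        · refine le_trans (lintegral_mono fun ξ => le_of_eq ?_) hA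
          simp only [ENNReal.rpow_ofNat, mul_pow, hw2']
    have hfin := hdual.trans hCS
    have hsq : I * I ≤ (C * J) * I := by
      have := mul_le_mul' hfin hfin
      refine this.trans (le_of_eq ?_)
      have e : ∀ a : ℝ≥0∞, a ^ (1 / 2 : ℝ) * a ^ (1 / 2 : ℝ) = a := fun a => by
        rw [← ENNReal.rpow_add_of_nonneg _ _ (by norm_num) (by norm_num)]; norm_num
      calc _ = (J ^ (1 / 2 : ℝ) * J ^ (1 / 2 : ℝ))
            * ((C * I) ^ (1 / 2 : ℝ) * (C * I) ^ (1 / 2 : ℝ)) := by ring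
        _ = J * (C * I) := by rw [e, e]
        _ = _ := by ring
    rcases eq_or_ne I 0 with h0 | h0
    · rw [h0]; exact zero_le
    · exact (ENNReal.mul_le_mul_iff_left h0 hIfin).1 hsq
  have hmono : Monotone fun R : ℕ => Set.Icc (-R : ℝ) R := fun a b hab => by
    have : (a : ℝ) ≤ b := by exact_mod_cast hab
    exact Set.Icc_subset_Icc (by linarith) this
  have hU : ⋃ R : ℕ, Set.Icc (-R : ℝ) R = Set.univ := by
    refine Set.eq_univ_of_forall fun x => Set.mem_iUnion.2 ?_
    obtain ⟨n, hn⟩ := exists_nat_ge |x|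
    exact ⟨n, abs_le.1 hn⟩
  rw [← setLIntegral_univ, ← hU, setLIntegral_iUnion_of_directed _ (hmono.directed_le)]
  exact iSup_le key

end ZK

/-! ### The maximal estimate for the free evolution and Minkowski's inequality -/

namespace ZK
open Real Filter Topology

/-- Finitely many measurable functions have a measurable index of maximality. -/
lemma exists_argmax {F : ℕ → ℝ → ℝ≥0∞} (hF : ∀ i, Measurable (F i)) (n : ℕ) :
    ∃ k : ℝ → ℕ, Measurable k ∧ ∀ x, ∀ i ≤ n, F i x ≤ F (k x) x := by
  induction n with
  | zero => exact ⟨fun _ => 0, measurable_const, fun x i hi => by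
      rw [Nat.le_zero.1 hi]⟩
  | succ n ih =>
    obtain ⟨k, hk, hmax⟩ := ih
    have hFk : Measurable fun x => F (k x) x :=
      (measurable_from_prod_countable_right (f := fun q : ℕ × ℝ => F q.1 q.2) hF).comp
        (hk.prodMk measurable_id)
    refine ⟨fun x => if F (k x) x ≤ F (n + 1) x then n + 1 else k x,
      Measurable.ite (measurableSet_le hFk (hF _)) measurable_const hk, fun x i hi => ?_⟩
    dsimp only
    split_ifs with h
    · rcases Nat.le_succ_iff.1 hi with hi | rfl
      · exact (hmax x i hi).trans h
      · exact le_rfl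
    · rcases Nat.le_succ_iff.1 hi with hi | rfl
      · exact hmax x i hi
      · exact (not_le.1 h).le

/-- Linearisation of a countable supremum: choose measurably, at each point, the best of the first
`n` functions, and let `n → ∞` with Fatou's lemma. -/
lemma lintegral_iSup_sq_le {F : ℕ → ℝ → ℝ≥0∞} (hF : ∀ i, Measurable (F i)) {B : ℝ≥0∞}
    (hB : ∀ k : ℝ → ℕ, Measurable k → ∫⁻ x, F (k x) x ^ 2 ≤ B) :
    ∫⁻ x, (⨆ i, F i x) ^ 2 ≤ B := by
  choose k hk hmax using exists_argmax hF
  have hkm : ∀ n, Measurable fun x => F (k n x) x := fun n =>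
    (measurable_from_prod_countable_right (f := fun q : ℕ × ℝ => F q.1 q.2) hF).comp
      ((hk n).prodMk measurable_id)
  calc _ ≤ ∫⁻ x, liminf (fun n => F (k n x) x ^ 2) atTop := by
        refine lintegral_mono fun x => ?_
        dsimp only
        rw [ENNReal.iSup_pow]
        refine iSup_le fun i => le_liminf_of_le (by isBoundedDefault) ?_
        filter_upwards [eventually_ge_atTop i] with n hn
        gcongr
        exact hmax n x i hn
    _ ≤ liminf (fun n => ∫⁻ x, F (k n x) x ^ 2) atTop :=
        lintegral_liminf_le fun n => (hkm n).pow_const 2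
    _ ≤ _ := by
        refine liminf_le_of_le (by isBoundedDefault) fun b hb => ?_
        obtain ⟨n, hn⟩ := hb.exists
        exact hn.trans (hB _ (hk n))

/-- The maximal estimate along a sequence of points `(x₂, s)`. -/
lemma countable_maximal : ∃ C : ℝ≥0∞, C ≠ ∞ ∧ ∀ p : ℕ → ℝ × ℝ,
    (∀ i, (p i).2 ∈ Set.Icc (0:ℝ) 1) → ∀ f : ℝ × ℝ → ℂ, Measurable f →
    ∫⁻ x, (⨆ i, ‖∫ ξ, ee (p i).2 (x, (p i).1) ξ * f ξ‖ₑ) ^ 2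
      ≤ C * ∫⁻ ξ : ℝ × ℝ, ENNReal.ofReal ((1 + ξ.1 ^ 2 + ξ.2 ^ 2) ^ ((7:ℝ) / 9)) * ‖f ξ‖ₑ ^ 2 := by
  obtain ⟨C, hC, hlin⟩ := linearized_bound
  refine ⟨C, hC, fun p hp f hfm => ?_⟩
  by_cases hf : Integrable f
  · refine lintegral_iSup_sq_le (F := fun i x => ‖∫ ξ, ee (p i).2 (x, (p i).1) ξ * f ξ‖ₑ)
      (fun i => ?_) (fun k hk => ?_)
    · have h1 : Measurable fun q : ℝ × (ℝ × ℝ) => ee (p i).2 (q.1, (p i).1) q.2 :=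
        measurable_ee_comp measurable_const (measurable_fst.prodMk measurable_const) measurable_snd
      have h2 : StronglyMeasurable (Function.uncurry fun (x : ℝ) (ξ : ℝ × ℝ) =>
          ee (p i).2 (x, (p i).1) ξ * f ξ) :=
        (h1.mul (hfm.comp measurable_snd)).stronglyMeasurable
      exact h2.integral_prod_right.measurable.enorm
    · have hp1 : Measurable fun x => (p (k x)).1 :=
        (measurable_from_nat (f := fun i => (p i).1)).comp hk
      have hp2 : Measurable fun x => (p (k x)).2 :=
        (measurable_from_nat (f := fun i => (p i).2)).comp hk
      exact hlin _ _ hp1 hp2 (fun x => hp _) f hfm hf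
  · -- the oscillatory integrals are all undefined, hence zero
    have h0 : ∀ s x, ∫ ξ, ee s x ξ * f ξ = 0 := fun s x => by
      refine integral_undef fun h => hf ?_
      refine h.congr' hfm.aestronglyMeasurable (ae_of_all _ fun ξ => ?_)
      rw [norm_mul, norm_ee, one_mul]
    simp [h0]

/-- The group as an oscillatory integral against the Fourier transform. -/
lemma U_eq (s : ℝ) (φ : ℝ × ℝ → ℂ) (x : ℝ × ℝ) : U s φ x = ∫ ξ, ee s x ξ * FT φ ξ := by
  simp only [U, FTinv, ee, Ph]
  congr 1; funext ξ
  rw [← mul_assoc, ← Complex.exp_add]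
  congr 2
  push_cast; ring

/-- The free evolution depends continuously on `(x₂, s)` (if the Fourier transform fails to be
integrable, it vanishes identically by convention). -/
lemma continuous_U {φ : ℝ × ℝ → ℂ} (hφ : Measurable (FT φ)) (x₁ : ℝ) :
    Continuous fun z : ℝ × ℝ => U z.2 φ (x₁, z.1) := by
  simp only [U_eq]
  by_cases hf : Integrable (FT φ)
  · refine continuous_of_dominated (bound := fun ξ => ‖FT φ ξ‖) (fun z => ?_)
      (fun z => ae_of_all _ fun ξ => ?_) hf.norm (ae_of_all _ fun ξ => ?_)
    · exact ((measurable_ee_comp (by fun_prop) (by fun_prop) (by fun_prop)).mul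
        hφ).aestronglyMeasurable
    · rw [norm_mul, norm_ee, one_mul]
    · unfold ee Ph; fun_prop
  · have h0 : ∀ s x, ∫ ξ, ee s x ξ * FT φ ξ = 0 := fun s x => by
      refine integral_undef fun h => hf ?_
      refine h.congr' hφ.aestronglyMeasurable (ae_of_all _ fun ξ => ?_)
      rw [norm_mul, norm_ee, one_mul]
    simp only [h0]
    exact continuous_const

/-- A sequence dense in `ℝ × [0,1]`, as the image of a dense sequence of `ℝ²` under the retraction
onto the strip. -/
def pt (i : ℕ) : ℝ × ℝ :=
  ((TopologicalSpace.denseSeq (ℝ × ℝ) i).1, max 0 (min (TopologicalSpace.denseSeq (ℝ × ℝ) i).2 1))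

lemma pt_mem (i : ℕ) : (pt i).2 ∈ Set.Icc (0:ℝ) 1 :=
  ⟨le_max_left _ _, max_le zero_le_one (min_le_right _ _)⟩

/-- The maximal function `sup_{x₂, s ∈ [0,1]} |U(s)φ(x₁,x₂)|`, along a dense sequence. -/
def MM (φ : ℝ × ℝ → ℂ) (x₁ : ℝ) : ℝ≥0∞ := ⨆ i, ‖U (pt i).2 φ (x₁, (pt i).1)‖ₑ

/-- The dense sequence captures the full supremum over `ℝ × [0,1]`, by continuity. -/
lemma le_MM {φ : ℝ × ℝ → ℂ} (hφ : Measurable (FT φ)) (x₁ x₂ : ℝ) {s : ℝ}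
    (hs : s ∈ Set.Icc (0:ℝ) 1) : ‖U s φ (x₁, x₂)‖ₑ ≤ MM φ x₁ := by
  have hc : Continuous fun z : ℝ × ℝ => ‖U (max 0 (min z.2 1)) φ (x₁, z.1)‖ₑ :=
    ((continuous_U hφ x₁).comp (by fun_prop :
      Continuous fun z : ℝ × ℝ => (z.1, max 0 (min z.2 1)))).enorm
  have := (TopologicalSpace.denseRange_denseSeq (ℝ × ℝ)).induction_on
    (p := fun z : ℝ × ℝ => ‖U (max 0 (min z.2 1)) φ (x₁, z.1)‖ₑ ≤ MM φ x₁) (x₂, s)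
    (isClosed_le hc continuous_const)
    (fun i => le_iSup (fun i => ‖U (pt i).2 φ (x₁, (pt i).1)‖ₑ) i)
  simpa [min_eq_left hs.2, max_eq_right hs.1] using this

/-- The maximal estimate for the free evolution. -/
lemma maximal_bound : ∃ C : ℝ≥0∞, C ≠ ∞ ∧ ∀ φ : ℝ × ℝ → ℂ, Measurable (FT φ) →
    (∫⁻ x, MM φ x ^ 2) ^ ((1:ℝ) / 2) ≤ C * HsNorm ((7:ℝ) / 9) φ := by
  obtain ⟨C, hC, hmax⟩ := countable_maximal
  refine ⟨C ^ ((1:ℝ) / 2), ENNReal.rpow_ne_top_of_nonneg (by norm_num) hC, fun φ hφ => ?_⟩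
  rw [HsNorm, ← ENNReal.mul_rpow_of_nonneg _ _ (by norm_num)]
  refine ENNReal.rpow_le_rpow ?_ (by norm_num)
  have := hmax pt pt_mem (FT φ) hφ
  simp only [← U_eq] at this
  refine this.trans (le_of_eq ?_)
  simp only [ENNReal.rpow_ofNat]
  rfl

/-- Minkowski's integral inequality for the `L²` norm. -/
lemma minkowski {A : ℝ → ℝ → ℝ≥0∞} (hA : Measurable (Function.uncurry A)) (μ : Measure ℝ)
    [SFinite μ] :
    (∫⁻ x, (∫⁻ τ, A τ x ∂μ) ^ 2) ^ ((1:ℝ) / 2)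
      ≤ ∫⁻ τ, (∫⁻ x, A τ x ^ 2) ^ ((1:ℝ) / 2) ∂μ := by
  have hA1 : ∀ τ, Measurable (A τ) := fun τ => hA.comp (measurable_const.prodMk measurable_id)
  have hA2 : ∀ x, Measurable fun τ => A τ x := fun x =>
    hA.comp (measurable_id.prodMk measurable_const)
  set N : ℝ → ℝ≥0∞ := fun τ => (∫⁻ x, A τ x ^ 2) ^ ((1:ℝ) / 2) with hN
  have hNm : Measurable N := by
    have : Measurable fun τ => ∫⁻ x, A τ x ^ 2 := by
      have h : Measurable (Function.uncurry fun τ x => A τ x ^ 2) := hA.pow_const 2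
      exact h.lintegral_prod_right'
    exact this.pow_const _
  have hI : Measurable fun x => ∫⁻ τ, A τ x ∂μ := by
    have h : Measurable (Function.uncurry fun x τ => A τ x) := hA.comp measurable_swap
    exact h.lintegral_prod_right'
  have key : ∫⁻ x, (∫⁻ τ, A τ x ∂μ) ^ 2 ≤ (∫⁻ τ, N τ ∂μ) ^ 2 := by
    calc ∫⁻ x, (∫⁻ τ, A τ x ∂μ) ^ 2
        = ∫⁻ x, ∫⁻ τ, A τ x * ∫⁻ σ, A σ x ∂μ ∂μ := by
          refine lintegral_congr fun x => ?_
          rw [lintegral_mul_const _ (hA2 x), sq]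
      _ = ∫⁻ τ, (∫⁻ x, A τ x * ∫⁻ σ, A σ x ∂μ) ∂μ := by
          refine lintegral_lintegral_swap (Measurable.aemeasurable ?_)
          exact Measurable.mul (hA.comp measurable_swap) (hI.comp measurable_fst)
      _ = ∫⁻ τ, ∫⁻ σ, (∫⁻ x, A τ x * A σ x) ∂μ ∂μ := by
          refine lintegral_congr fun τ => ?_
          rw [← lintegral_lintegral_swap (Measurable.aemeasurable ?_)]
          · refine lintegral_congr fun x => ?_
            rw [lintegral_const_mul _ (hA2 x)]
          · exact Measurable.mul ((hA1 τ).comp measurable_fst) (hA.comp measurable_swap)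
      _ ≤ ∫⁻ τ, ∫⁻ σ, N τ * N σ ∂μ ∂μ := by
          refine lintegral_mono fun τ => lintegral_mono fun σ => ?_
          have := ENNReal.lintegral_mul_le_Lp_mul_Lq (volume : Measure ℝ)
            Real.HolderConjugate.two_two (hA1 τ).aemeasurable (hA1 σ).aemeasurable
          simpa only [Pi.mul_apply, ENNReal.rpow_ofNat] using this
      _ = (∫⁻ τ, N τ ∂μ) ^ 2 := by
          simp only [lintegral_const_mul _ hNm]
          rw [lintegral_mul_const _ hNm, sq]
  refine (ENNReal.rpow_le_rpow key (by norm_num)).trans (le_of_eq ?_)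
  rw [← ENNReal.rpow_ofNat, ← ENNReal.rpow_mul]
  norm_num

end ZK

/-! ### The Duhamel term -/

namespace ZK
open Real Filter Topology

/-- For a continuous curve of Schwartz functions the Fourier transform is jointly measurable. -/
lemma measurable_FT_curve {G : ℝ → SchwartzMap (ℝ × ℝ) ℂ} (hG : Continuous G) :
    Measurable fun q : ℝ × (ℝ × ℝ) => FT (G q.1) q.2 := by
  have h1 : Continuous fun q : ℝ × (ℝ × ℝ) => G q.1 q.2 := by
    have h2 : Continuous fun τ => SchwartzMap.toBoundedContinuousFunctionCLM ℝ (ℝ × ℝ) ℂ (G τ) :=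
      (SchwartzMap.toBoundedContinuousFunctionCLM ℝ (ℝ × ℝ) ℂ).continuous.comp hG
    have h3 : Continuous fun q : ℝ × (ℝ × ℝ) =>
        (SchwartzMap.toBoundedContinuousFunctionCLM ℝ (ℝ × ℝ) ℂ (G q.1)) q.2 :=
      (h2.comp continuous_fst).eval continuous_snd
    exact h3
  have h4 : Continuous fun q : (ℝ × (ℝ × ℝ)) × (ℝ × ℝ) => Complex.exp
      (((-(2 * Real.pi * (q.2.1 * q.1.2.1 + q.2.2 * q.1.2.2)) : ℝ) : ℂ) * Complex.I)
        * G q.1.1 q.2 := by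
    refine Continuous.mul (by fun_prop) ?_
    exact h1.comp (by fun_prop :
      Continuous fun q : (ℝ × (ℝ × ℝ)) × (ℝ × ℝ) => (q.1.1, q.2))
  exact (h4.measurable.stronglyMeasurable.integral_prod_right' (ν := volume)).measurable

lemma measurable_FT_slice {G : ℝ → SchwartzMap (ℝ × ℝ) ℂ} (hG : Continuous G) (τ : ℝ) :
    Measurable (FT (G τ)) := by
  have h : Measurable fun ξ : ℝ × ℝ => (τ, ξ) := measurable_const.prodMk measurable_id
  have h2 := (measurable_FT_curve hG).comp h
  simp only [Function.comp_def] at h2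
  exact h2

lemma measurable_MM_curve {G : ℝ → SchwartzMap (ℝ × ℝ) ℂ} (hG : Continuous G) :
    Measurable (Function.uncurry fun (τ : ℝ) (x : ℝ) => MM (G τ) x) := by
  have hF := measurable_FT_curve hG
  have h3 : ∀ i, Measurable fun q : ℝ × ℝ => ‖U (pt i).2 (G q.1) (q.2, (pt i).1)‖ₑ := by
    intro i
    have h0 : Measurable fun q : (ℝ × ℝ) × (ℝ × ℝ) => (q.1.1, q.2) :=
      (measurable_fst.comp measurable_fst).prodMk measurable_snd
    have h1 : Measurable fun q : (ℝ × ℝ) × (ℝ × ℝ) => FT (G q.1.1) q.2 := by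
      have h5 := hF.comp h0
      simp only [Function.comp_def] at h5
      exact h5
    have h2 : Measurable fun q : (ℝ × ℝ) × (ℝ × ℝ) => ee (pt i).2 (q.1.2, (pt i).1) q.2 :=
      measurable_ee_comp measurable_const
        ((measurable_snd.comp measurable_fst).prodMk measurable_const) measurable_snd
    have h4 := ((h2.mul h1).stronglyMeasurable.integral_prod_right' (ν := volume)).measurable.enorm
    simp only [U_eq]
    exact h4
  exact Measurable.iSup h3

/-- Pointwise, the maximal function of the Duhamel term is dominated by the integral of the maximal
functions of the free evolutions. -/
lemma duhamel_pointwise {T : ℝ} (hT1 : T ≤ 1) {G : ℝ → SchwartzMap (ℝ × ℝ) ℂ} (hG : Continuous G)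
    {g : ℝ → ℝ × ℝ → ℂ} (hg : ∀ τ ∈ Set.Icc 0 T, g τ = G τ) (x₁ : ℝ) :
    (⨆ x₂ : ℝ, ⨆ t ∈ Set.Icc (0:ℝ) T, ‖Duh g t (x₁, x₂)‖ₑ)
      ≤ ∫⁻ τ in Set.Icc (0:ℝ) T, MM (G τ) x₁ := by
  refine iSup_le fun x₂ => iSup₂_le fun t ht => ?_
  have hFm : ∀ τ, Measurable (FT (G τ)) := fun τ =>
    measurable_FT_slice hG τ
  rw [Duh, intervalIntegral.integral_of_le ht.1]
  calc _ ≤ ∫⁻ τ in Set.Ioc 0 t, ‖U (t - τ) (g τ) (x₁, x₂)‖ₑ := enorm_integral_le_lintegral_enorm _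
    _ ≤ ∫⁻ τ in Set.Ioc 0 t, MM (G τ) x₁ := by
        refine setLIntegral_mono' measurableSet_Ioc fun τ hτ => ?_
        rw [hg τ ⟨hτ.1.le, hτ.2.trans ht.2⟩]
        exact le_MM (hFm τ) _ _ ⟨by linarith [hτ.2], by linarith [hτ.1, ht.2]⟩
    _ ≤ _ := lintegral_mono_set (Set.Ioc_subset_Icc_self.trans (Set.Icc_subset_Icc_right ht.2))

end ZK

/-- `L²_{x₁} L^∞_{x₂ T}` estimate for the Duhamel term by the
`L¹_T H^{7/9}_x` norm of the source. -/
theorem stmt6 :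
    ∃ C : ℝ, 0 < C ∧ ∀ T : ℝ, 0 ≤ T → T ≤ 1 →
      ∀ g : ℝ → SchwartzMap (ℝ × ℝ) ℂ, ContinuousOn g (Set.Icc 0 T) →
        L2x1LinfNorm T (Duh (fun τ => ⇑(g τ)))
          ≤ ENNReal.ofReal C * ∫⁻ τ in Set.Icc (0:ℝ) T, HsNorm ((7:ℝ)/9) ⇑(g τ) := by
  obtain ⟨C, hC, hmax⟩ := ZK.maximal_bound
  refine ⟨C.toReal + 1, by positivity, fun T hT hT1 g hg => ?_⟩
  -- extend the curve from `[0,T]` to `ℝ` by constants, to have continuity everywhere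
  have hGc : Continuous fun τ => g (Set.projIcc 0 T hT τ) :=
    hg.comp_continuous (continuous_subtype_val.comp continuous_projIcc) fun τ =>
      (Set.projIcc 0 T hT τ).2
  set G : ℝ → SchwartzMap (ℝ × ℝ) ℂ := fun τ => g (Set.projIcc 0 T hT τ) with hG
  have hgG : ∀ τ ∈ Set.Icc 0 T, (fun τ => ⇑(g τ)) τ = ⇑(G τ) := fun τ hτ => by
    simp only [hG, Set.projIcc_of_mem hT hτ]
  have hFm : ∀ τ, Measurable (FT (G τ)) := fun τ =>
    ZK.measurable_FT_slice hGc τ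
  calc L2x1LinfNorm T (Duh (fun τ => ⇑(g τ)))
      ≤ (∫⁻ x, (∫⁻ τ in Set.Icc (0:ℝ) T, ZK.MM (G τ) x) ^ 2) ^ ((1:ℝ) / 2) := by
        refine ENNReal.rpow_le_rpow (lintegral_mono fun x => ?_) (by norm_num)
        rw [ENNReal.rpow_ofNat]
        exact pow_le_pow_left₀ zero_le (ZK.duhamel_pointwise hT1 hGc hgG x) 2
    _ ≤ ∫⁻ τ in Set.Icc (0:ℝ) T, (∫⁻ x, ZK.MM (G τ) x ^ 2) ^ ((1:ℝ) / 2) :=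
        ZK.minkowski (ZK.measurable_MM_curve hGc) _
    _ ≤ ∫⁻ τ in Set.Icc (0:ℝ) T, C * HsNorm ((7:ℝ)/9) ⇑(g τ) := by
        refine setLIntegral_mono' measurableSet_Icc fun τ hτ => ?_
        have h := hmax (G τ) (hFm τ)
        rw [← hgG τ hτ] at h ⊢
        exact h
    _ = C * ∫⁻ τ in Set.Icc (0:ℝ) T, HsNorm ((7:ℝ)/9) ⇑(g τ) := lintegral_const_mul' _ _ hC
    _ ≤ _ := by
        gcongr
        rw [ENNReal.le_ofReal_iff_toReal_le hC (by positivity)]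
        linarith
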